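/- Let k ≥ 3 be an integer. For every ε > 0 there exists a constant A > 0 such that for all real X ≥ 2, |2 V_k ∫_0^∞ P_k(⌊t⌋)(⌊t⌋^{k/2} − t^{k/2}) e^{−t/X} dt + (π^{k/2} k Γ(k−1) V_k/(4 Γ(k/2))) X^{k−1}| ≤ A X^{k−2+ε}, where ⌊t⌋ denotes the greatest integer ≤ t. -/

import Mathlib

open scoped Real

/-- `rk k m` = number of ways to write `m` as a sum of `k` integer squares. -/
noncomputable def rk (k m : ℕ) : ℕ :=
  Nat.card {v : Fin k → ℤ // (∑ i, (v i) ^ 2) = (m : ℤ)}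

/-- `Sk k t` = number of lattice points of `ℤ^k` in the closed ball of radius `√t`. -/
noncomputable def Sk (k : ℕ) (t : ℝ) : ℕ :=
  Nat.card {v : Fin k → ℤ // (∑ i, ((v i : ℝ)) ^ 2) ≤ t}

/-- `Vk k` = volume of the unit ball in `ℝ^k`. -/
noncomputable def Vk (k : ℕ) : ℝ :=
  Real.pi ^ ((k : ℝ) / 2) / Real.Gamma ((k : ℝ) / 2 + 1)

/-- `Pk k t` = lattice point discrepancy of the `k`-dimensional ball of radius `√t`. -/
noncomputable def Pk (k : ℕ) (t : ℝ) : ℝ :=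
  (Sk k t : ℝ) - Vk k * t ^ ((k : ℝ) / 2)

/-- Value of the (analytically continued) Riemann zeta function at a real point. -/
noncomputable def rzeta (x : ℝ) : ℝ := (riemannZeta (x : ℂ)).re

/-- The Riemann zeta function with its 2-factor removed. -/
noncomputable def rzeta2 (x : ℝ) : ℝ := (1 - (2 : ℝ) ^ (-x)) * rzeta x

/-- The constant `C_k` for `k ≥ 4`. -/
noncomputable def Ck (k : ℕ) : ℝ :=
  ((k : ℝ) ^ 2 / 24) * (Vk k) ^ 2 +
    Real.pi ^ (k : ℝ) * rzeta ((k : ℝ) - 2) * (1 + (2 : ℝ) ^ ((3 : ℝ) - (k : ℝ))) /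
      (12 * (Real.Gamma ((k : ℝ) / 2)) ^ 2 * rzeta2 (k : ℝ))

section

open Set MeasureTheory Filter Topology

theorem hasSum_prod_fin {f : ℤ → ℝ} (hf : Summable f) (h0 : ∀ n, 0 ≤ f n) (k : ℕ) :
    HasSum (fun v : Fin k → ℤ => ∏ i, f (v i)) ((∑' n, f n) ^ k) := by
  induction k with
  | zero => simp [hasSum_unique]
  | succ k ih =>
    set g : (Fin k → ℤ) → ℝ := fun v => ∏ i, f (v i) with hg
    have hg0 : ∀ v, 0 ≤ g v := fun v => Finset.prod_nonneg fun i _ => h0 _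
    have h1 : Summable fun x : ℤ × (Fin k → ℤ) => f x.1 * g x.2 :=
      Summable.mul_of_nonneg hf ih.summable h0 hg0
    have h2 : HasSum (fun x : ℤ × (Fin k → ℤ) => f x.1 * g x.2) ((∑' n, f n) * (∑' n, f n) ^ k) :=
      HasSum.mul hf.hasSum ih h1
    rw [pow_succ', ← (Fin.consEquiv fun _ : Fin (k + 1) => ℤ).hasSum_iff]
    convert h2 using 1
    ext x
    simp [hg, Fin.consEquiv, Fin.prod_univ_succ]

theorem Sk_floor (k : ℕ) (t : ℝ) : Sk k (⌊t⌋ : ℝ) = Sk k t := by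
  unfold Sk
  have h (v : Fin k → ℤ) :
      (∑ i, ((v i : ℝ)) ^ 2) ≤ (⌊t⌋ : ℝ) ↔ (∑ i, ((v i : ℝ)) ^ 2) ≤ t := by
    have : (∑ i, ((v i : ℝ)) ^ 2) = ((∑ i, (v i) ^ 2 : ℤ) : ℝ) := by push_cast; rfl
    rw [this, Int.cast_le, Int.le_floor]
  simp_rw [h]

theorem Pk_floor (k : ℕ) (t : ℝ) :
    Pk k (⌊t⌋ : ℝ) = Pk k t + Vk k * (t ^ ((k : ℝ) / 2) - (⌊t⌋ : ℝ) ^ ((k : ℝ) / 2)) := by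
  unfold Pk
  rw [Sk_floor]
  ring

theorem setOf_sum_sq_le_subset (k : ℕ) (t : ℝ) :
    {v : Fin k → ℤ | (∑ i, ((v i : ℝ)) ^ 2) ≤ t} ⊆
      (Fintype.piFinset fun _ : Fin k => Finset.Icc (-(⌊√t⌋₊ : ℤ)) ⌊√t⌋₊ : Finset (Fin k → ℤ)) := by
  intro v hv
  simp only [mem_ofPred_eq] at hv
  simp only [Finset.mem_coe, Fintype.mem_piFinset, Finset.mem_Icc]
  intro i
  have h1 : (v i : ℝ) ^ 2 ≤ t :=
    (Finset.single_le_sum (f := fun i => ((v i : ℝ)) ^ 2) (fun _ _ => sq_nonneg _)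
      (Finset.mem_univ i)).trans hv
  have h2 : |(v i : ℝ)| ≤ √t := Real.abs_le_sqrt h1
  have h3 : ((v i).natAbs : ℝ) ≤ √t := by rwa [Nat.cast_natAbs, Int.cast_abs]
  have h4 : (v i).natAbs ≤ ⌊√t⌋₊ := Nat.le_floor h3
  omega

theorem finite_setOf_sum_sq_le (k : ℕ) (t : ℝ) :
    {v : Fin k → ℤ | (∑ i, ((v i : ℝ)) ^ 2) ≤ t}.Finite :=
  (Finset.finite_toSet _).subset (setOf_sum_sq_le_subset k t)

theorem Sk_le (k : ℕ) (t : ℝ) : (Sk k t : ℝ) ≤ (2 * √t + 1) ^ k := by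
  have h1 : Sk k t ≤ (2 * ⌊√t⌋₊ + 1) ^ k := by
    have := Set.ncard_le_ncard (setOf_sum_sq_le_subset k t) (Finset.finite_toSet _)
    rw [Set.ncard_coe_finset, Fintype.card_piFinset] at this
    simp only [Int.card_Icc, Finset.prod_const, Finset.card_univ, Fintype.card_fin] at this
    unfold Sk
    rw [← Set.coe_ofPred, Nat.card_coe_set_eq]
    refine this.trans_eq ?_
    congr 1
    omega
  calc (Sk k t : ℝ) ≤ (2 * ⌊√t⌋₊ + 1) ^ k := by exact_mod_cast h1
    _ ≤ _ := by
      gcongr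
      exact Nat.floor_le (Real.sqrt_nonneg t)

theorem Sk_mono (k : ℕ) : Monotone fun t => (Sk k t : ℝ) := by
  intro s t hst
  have := Set.ncard_le_ncard (s := {v : Fin k → ℤ | (∑ i, ((v i : ℝ)) ^ 2) ≤ s})
    (t := {v : Fin k → ℤ | (∑ i, ((v i : ℝ)) ^ 2) ≤ t})
    (fun v hv => le_trans hv hst) (finite_setOf_sum_sq_le k t)
  simp only [Nat.cast_le]
  exact this

theorem measurable_Pk (k : ℕ) : Measurable (Pk k) := by
  unfold Pk
  exact (Sk_mono k).measurable.sub (by fun_prop)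

theorem Vk_pos (k : ℕ) : 0 < Vk k := by
  unfold Vk
  have := Real.Gamma_pos_of_pos (show (0 : ℝ) < (k : ℝ) / 2 + 1 by positivity)
  positivity

theorem abs_Pk_le (k : ℕ) :
    ∃ C : ℝ, 0 < C ∧ ∀ t : ℝ, 0 ≤ t → |Pk k t| ≤ C * (1 + t ^ ((k : ℝ) / 2)) := by
  have hV := Vk_pos k
  refine ⟨3 ^ k + Vk k, by positivity, fun t ht => ?_⟩
  have ha : 0 ≤ t ^ ((k : ℝ) / 2) := by positivity
  have h1 : (Sk k t : ℝ) ≤ 3 ^ k * (1 + t ^ ((k : ℝ) / 2)) := by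
    rcases le_total t 1 with h | h
    · refine (Sk_le k t).trans ?_
      have : √t ≤ 1 := Real.sqrt_le_one.2 h
      calc (2 * √t + 1) ^ k ≤ (3 : ℝ) ^ k := by gcongr; linarith
        _ ≤ _ := le_mul_of_one_le_right (by positivity) (by linarith)
    · refine (Sk_le k t).trans ?_
      have : 1 ≤ √t := Real.one_le_sqrt.2 h
      calc (2 * √t + 1) ^ k ≤ (3 * √t) ^ k := by gcongr; linarith
        _ = 3 ^ k * t ^ ((k : ℝ) / 2) := by
          rw [mul_pow, Real.sqrt_eq_rpow, ← Real.rpow_natCast (t ^ (1 / 2 : ℝ)), ← Real.rpow_mul ht]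
          congr 2
          ring
        _ ≤ _ := by gcongr; linarith
  unfold Pk
  rw [abs_le]
  have h0 : (0 : ℝ) ≤ Sk k t := by positivity
  have h3 : (0 : ℝ) < 3 ^ k := by positivity
  constructor <;> nlinarith [mul_nonneg h3.le ha, mul_nonneg hV.le ha]

theorem integrableOn_rpow_mul_exp {b s : ℝ} (hb : -1 < b) (hs : 0 < s) :
    IntegrableOn (fun t : ℝ => t ^ b * Real.exp (-(s * t))) (Ioi 0) := by
  simpa using integrableOn_rpow_mul_exp_neg_mul_rpow hb one_pos hs

theorem integral_rpow_mul_exp {b s : ℝ} (hb : -1 < b) (hs : 0 < s) :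
    ∫ t in Ioi (0 : ℝ), t ^ b * Real.exp (-(s * t)) = Real.Gamma (b + 1) * s ^ (-(b + 1)) := by
  have := Real.integral_rpow_mul_exp_neg_mul_Ioi (a := b + 1) (by linarith) hs
  rw [add_sub_cancel_right] at this
  rw [this, mul_comm, one_div, Real.inv_rpow hs.le, Real.rpow_neg hs.le]

theorem ofReal_tsum_exp_eq_jacobiTheta (s : ℝ) :
    ((∑' n : ℤ, Real.exp (-(s * (n : ℝ) ^ 2)) : ℝ) : ℂ) = jacobiTheta (Complex.I * s / π) := by
  have hp : (π : ℂ) ≠ 0 := by exact_mod_cast Real.pi_ne_zero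
  rw [jacobiTheta, Complex.ofReal_tsum]
  congr 1
  ext n
  push_cast
  congr 1
  field_simp
  rw [Complex.I_sq]
  ring

theorem summable_exp_neg_mul_sq {s : ℝ} (hs : 0 < s) :
    Summable fun n : ℤ => Real.exp (-(s * (n : ℝ) ^ 2)) := by
  have hp : (π : ℂ) ≠ 0 := by exact_mod_cast Real.pi_ne_zero
  have hp' := Real.pi_pos
  have h := (hasSum_jacobiTheta₂_term 0 (τ := Complex.I * ((s / π : ℝ) : ℂ)) (by
    simp only [Complex.mul_im, Complex.I_re, Complex.I_im, Complex.ofReal_re]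
    simp
    positivity)).summable
  rw [← Complex.summable_ofReal]
  convert h using 2 with n
  rw [jacobiTheta₂_term]
  push_cast
  congr 1
  field_simp
  linear_combination (-(s : ℂ) * n ^ 2) * Complex.I_sq

theorem tsum_exp_neg_mul_sq_functional {s : ℝ} (hs : 0 < s) :
    ∑' n : ℤ, Real.exp (-(s * (n : ℝ) ^ 2)) =
      (π / s) ^ (1 / 2 : ℝ) * ∑' n : ℤ, Real.exp (-(π ^ 2 / s * (n : ℝ) ^ 2)) := by
  have hp := Real.pi_pos
  have h := Real.tsum_exp_neg_mul_int_sq (a := s / π) (by positivity)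
  have h1 (n : ℤ) : -π * (s / π) * (n : ℝ) ^ 2 = -(s * (n : ℝ) ^ 2) := by field_simp
  have h2 (n : ℤ) : -π / (s / π) * (n : ℝ) ^ 2 = -(π ^ 2 / s * (n : ℝ) ^ 2) := by field_simp
  simp_rw [h1, h2] at h
  rw [h, one_div, ← Real.inv_rpow (by positivity), inv_div]

theorem Sk_eq_tsum (k : ℕ) (t : ℝ) :
    (Sk k t : ℝ) =
      ∑' v : Fin k → ℤ, (Ici (∑ i, ((v i : ℝ)) ^ 2)).indicator (fun _ => (1 : ℝ)) t := by
  have h := tsum_subtype {v : Fin k → ℤ | (∑ i, ((v i : ℝ)) ^ 2) ≤ t} (fun _ => (1 : ℝ))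
  rw [tsum_const, nsmul_eq_mul, mul_one] at h
  unfold Sk
  rw [← Set.coe_ofPred, h]
  rfl

theorem integral_Ioi_indicator_mul_exp {a s : ℝ} (ha : 0 ≤ a) (hs : 0 < s) :
    IntegrableOn (fun t => (Ici a).indicator (fun _ => (1 : ℝ)) t * Real.exp (-(s * t))) (Ioi 0) ∧
    ∫ t in Ioi (0 : ℝ), (Ici a).indicator (fun _ => (1 : ℝ)) t * Real.exp (-(s * t)) =
      Real.exp (-(s * a)) / s := by
  have h1 : ∀ t, (Ici a).indicator (fun _ => (1 : ℝ)) t * Real.exp (-(s * t)) =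
      (Ici a).indicator (fun t => Real.exp (-s * t)) t := by
    intro t
    by_cases h : t ∈ Ici a <;> simp [h]
  have h2 : (Ioi 0 ∩ Ici a : Set ℝ) =ᵐ[volume] (Ioi a : Set ℝ) := by
    rw [eventuallyEq_set]
    filter_upwards [volume.ae_ne a] with x hx
    simp only [mem_inter_iff, mem_Ioi, mem_Ici]
    exact ⟨fun h => lt_of_le_of_ne h.2 hx.symm, fun h => ⟨ha.trans_lt h, h.le⟩⟩
  simp_rw [h1]
  constructor
  · rw [IntegrableOn, integrable_indicator_iff measurableSet_Ici, IntegrableOn,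
      Measure.restrict_restrict measurableSet_Ici, inter_comm, Measure.restrict_congr_set h2]
    exact integrableOn_exp_mul_Ioi (by linarith) a
  · rw [setIntegral_indicator measurableSet_Ici, setIntegral_congr_set h2,
      integral_exp_mul_Ioi (by linarith)]
    rw [neg_div_neg_eq, neg_mul]

theorem integral_Sk_mul_exp (k : ℕ) {s : ℝ} (hs : 0 < s) :
    ∫ t in Ioi (0 : ℝ), (Sk k t : ℝ) * Real.exp (-(s * t)) =
      (∑' n : ℤ, Real.exp (-(s * (n : ℝ) ^ 2))) ^ k / s := by
  have ha (v : Fin k → ℤ) : 0 ≤ ∑ i, ((v i : ℝ)) ^ 2 := Finset.sum_nonneg fun i _ => sq_nonneg _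
  have hsum : HasSum (fun v : Fin k → ℤ => Real.exp (-(s * ∑ i, ((v i : ℝ)) ^ 2)) / s)
      ((∑' n : ℤ, Real.exp (-(s * (n : ℝ) ^ 2))) ^ k / s) := by
    have := (hasSum_prod_fin (summable_exp_neg_mul_sq hs)
      (fun n => (Real.exp_pos _).le) k).div_const s
    have h (v : Fin k → ℤ) : Real.exp (-(s * ∑ i, ((v i : ℝ)) ^ 2)) =
        ∏ i, Real.exp (-(s * ((v i : ℝ)) ^ 2)) := by
      rw [← Real.exp_sum, Finset.mul_sum, Finset.sum_neg_distrib]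
    simpa only [h] using this
  have h1 := hasSum_integral_of_summable_integral_norm (μ := volume.restrict (Ioi (0 : ℝ)))
    (F := fun (v : Fin k → ℤ) t => (Ici (∑ i, ((v i : ℝ)) ^ 2)).indicator (fun _ => (1 : ℝ)) t *
      Real.exp (-(s * t))) (fun v => (integral_Ioi_indicator_mul_exp (ha v) hs).1) (by
      convert hsum.summable using 2 with v
      rw [← (integral_Ioi_indicator_mul_exp (ha v) hs).2]
      congr 1
      ext t
      rw [Real.norm_of_nonneg]
      exact mul_nonneg (indicator_nonneg (fun _ _ => zero_le_one) _) (Real.exp_pos _).le)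
  simp_rw [fun v => (integral_Ioi_indicator_mul_exp (ha v) hs).2, tsum_mul_right] at h1
  rw [hsum.unique h1]
  congr 1
  ext t
  rw [Sk_eq_tsum]

theorem integrableOn_Pk_mul (k : ℕ) {b s : ℝ} (hb : -1 < b) (hs : 0 < s) :
    IntegrableOn (fun t => Pk k t * (t ^ b * Real.exp (-(s * t)))) (Ioi 0) := by
  obtain ⟨C, hC, hP⟩ := abs_Pk_le k
  have h1 := ((integrableOn_rpow_mul_exp hb hs).add
    (integrableOn_rpow_mul_exp (b := k / 2 + b) (by
      have : (0 : ℝ) ≤ k := by positivity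
      linarith) hs)).const_mul C
  refine Integrable.mono' h1 ?_ ?_
  · have := measurable_Pk k
    fun_prop
  · refine (ae_restrict_mem measurableSet_Ioi).mono fun t (ht : 0 < t) => ?_
    simp only [Pi.add_apply]
    have h2 : 0 < t ^ b * Real.exp (-(s * t)) := by positivity
    rw [norm_mul, Real.norm_eq_abs, Real.norm_of_nonneg h2.le, Real.rpow_add ht]
    refine (mul_le_mul_of_nonneg_right (hP t ht.le) h2.le).trans_eq ?_
    ring

theorem integral_Pk_mul_exp (k : ℕ) {s : ℝ} (hs : 0 < s) :
    ∫ t in Ioi (0 : ℝ), Pk k t * Real.exp (-(s * t)) =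
      π ^ ((k : ℝ) / 2) * s ^ (-((k : ℝ) / 2 + 1)) *
        ((∑' n : ℤ, Real.exp (-(π ^ 2 / s * (n : ℝ) ^ 2))) ^ k - 1) := by
  have hp := Real.pi_pos
  have hk : (0 : ℝ) ≤ k := by positivity
  have hb : (-1 : ℝ) < k / 2 := by linarith
  have hV := (integrableOn_rpow_mul_exp hb hs).const_mul (Vk k)
  have hP := integrableOn_Pk_mul k (b := 0) (by norm_num) hs
  simp only [Real.rpow_zero, one_mul] at hP
  have hS : IntegrableOn (fun t => (Sk k t : ℝ) * Real.exp (-(s * t))) (Ioi 0) := by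
    refine (hP.add hV).congr ?_
    refine Eventually.of_forall fun t => ?_
    simp only [Pk, Pi.add_apply]
    ring
  have h1 : ∫ t in Ioi (0 : ℝ), Pk k t * Real.exp (-(s * t)) =
      (∫ t in Ioi (0 : ℝ), (Sk k t : ℝ) * Real.exp (-(s * t))) -
      ∫ t in Ioi (0 : ℝ), Vk k * (t ^ ((k : ℝ) / 2) * Real.exp (-(s * t))) := by
    rw [← integral_sub hS hV]
    congr 1
    ext t
    simp only [Pk]
    ring
  have hG := Real.Gamma_pos_of_pos (show (0 : ℝ) < (k : ℝ) / 2 + 1 by positivity)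
  rw [h1, integral_Sk_mul_exp k hs, integral_const_mul, integral_rpow_mul_exp hb hs,
    tsum_exp_neg_mul_sq_functional hs, mul_pow, ← Real.rpow_natCast (_ ^ (1 / 2 : ℝ)),
    ← Real.rpow_mul (by positivity), Vk, Real.rpow_neg hs.le, Real.rpow_add hs, Real.rpow_one,
    show (1 / 2 * (k : ℝ)) = k / 2 by ring, Real.div_rpow hp.le hs.le]
  field_simp

/-- The `j`-th derivative of the Laplace transform of the discrepancy `Pk k`. -/
noncomputable def laplacePk (k j : ℕ) (z : ℂ) : ℂ :=
  ∫ t in Ioi (0 : ℝ), (Pk k t : ℂ) * ((-(t : ℂ)) ^ j * Complex.exp (-(z * t)))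

theorem integrableOn_abs_Pk_mul_pow (k j : ℕ) {s : ℝ} (hs : 0 < s) :
    IntegrableOn (fun t => |Pk k t| * (t ^ j * Real.exp (-(s * t)))) (Ioi 0) := by
  have hj : (0 : ℝ) ≤ j := by positivity
  refine (integrableOn_Pk_mul k (b := j) (by linarith) hs).norm.congr ?_
  refine (ae_restrict_mem measurableSet_Ioi).mono fun t (ht : 0 < t) => ?_
  simp only [Real.rpow_natCast]
  rw [norm_mul, Real.norm_eq_abs, Real.norm_of_nonneg]
  positivity

theorem norm_laplacePk_integrand (k j : ℕ) (z : ℂ) {t : ℝ} (ht : 0 < t) :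
    ‖(Pk k t : ℂ) * ((-(t : ℂ)) ^ j * Complex.exp (-(z * t)))‖ =
      |Pk k t| * (t ^ j * Real.exp (-(z.re * t))) := by
  rw [norm_mul, norm_mul, norm_pow, norm_neg, Complex.norm_real, Complex.norm_real,
    Complex.norm_exp, Real.norm_eq_abs, Real.norm_of_nonneg ht.le]
  simp

theorem measurable_laplacePk_integrand (k j : ℕ) (z : ℂ) :
    Measurable fun t : ℝ => (Pk k t : ℂ) * ((-(t : ℂ)) ^ j * Complex.exp (-(z * t))) := by
  have := measurable_Pk k
  fun_prop

theorem integrableOn_laplacePk (k j : ℕ) {z : ℂ} (hz : 0 < z.re) :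
    IntegrableOn (fun t : ℝ => (Pk k t : ℂ) * ((-(t : ℂ)) ^ j * Complex.exp (-(z * t))))
      (Ioi 0) := by
  refine Integrable.mono' (integrableOn_abs_Pk_mul_pow k j hz)
    (measurable_laplacePk_integrand k j z).aestronglyMeasurable ?_
  refine (ae_restrict_mem measurableSet_Ioi).mono fun t (ht : 0 < t) => ?_
  exact (norm_laplacePk_integrand k j z ht).le

theorem hasDerivAt_laplacePk (k j : ℕ) {z : ℂ} (hz : 0 < z.re) :
    HasDerivAt (laplacePk k j) (laplacePk k (j + 1) z) z := by
  refine (hasDerivAt_integral_of_dominated_loc_of_deriv_le (μ := volume.restrict (Ioi (0 : ℝ)))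
    (F := fun z t => (Pk k t : ℂ) * ((-(t : ℂ)) ^ j * Complex.exp (-(z * t))))
    (F' := fun z t => (Pk k t : ℂ) * ((-(t : ℂ)) ^ (j + 1) * Complex.exp (-(z * t))))
    (bound := fun t => |Pk k t| * (t ^ (j + 1) * Real.exp (-(z.re / 2 * t))))
    (Metric.ball_mem_nhds z (half_pos hz)) ?_ (integrableOn_laplacePk k j hz) ?_ ?_ ?_ ?_).2
  · exact Eventually.of_forall fun w => (measurable_laplacePk_integrand k j w).aestronglyMeasurable
  · exact (measurable_laplacePk_integrand k (j + 1) z).aestronglyMeasurable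
  · refine (ae_restrict_mem measurableSet_Ioi).mono fun t (ht : 0 < t) w hw => ?_
    rw [norm_laplacePk_integrand k (j + 1) w ht]
    have h1 : |(w - z).re| < z.re / 2 :=
      (Complex.abs_re_le_norm _).trans_lt (by rwa [Metric.mem_ball, dist_eq_norm] at hw)
    rw [Complex.sub_re, abs_lt] at h1
    have : z.re / 2 ≤ w.re := by linarith [h1.1]
    gcongr
  · exact integrableOn_abs_Pk_mul_pow k (j + 1) (half_pos hz)
  · refine Eventually.of_forall fun t w _ => ?_
    have h1 : HasDerivAt (fun w : ℂ => Complex.exp (-(w * t)))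
        (Complex.exp (-(w * t)) * (-(1 * (t : ℂ)))) w :=
      (((hasDerivAt_id w).mul_const (t : ℂ)).neg).cexp
    refine ((h1.const_mul ((-(t : ℂ)) ^ j)).const_mul (Pk k t : ℂ)).congr_deriv ?_
    ring

theorem iteratedDeriv_laplacePk (k j : ℕ) {z : ℂ} (hz : 0 < z.re) :
    iteratedDeriv j (laplacePk k 0) z = laplacePk k j z := by
  induction j generalizing z with
  | zero => simp
  | succ j ih =>
    rw [iteratedDeriv_succ]
    have : iteratedDeriv j (laplacePk k 0) =ᶠ[𝓝 z] laplacePk k j := by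
      filter_upwards [(isOpen_lt continuous_const Complex.continuous_re).mem_nhds hz] with w hw
      exact ih hw
    rw [this.deriv_eq, (hasDerivAt_laplacePk k j hz).deriv]

/-- The closed form of the Laplace transform of `Pk k`, via the theta function. -/
noncomputable def thetaLaplace (k : ℕ) (z : ℂ) : ℂ :=
  (π : ℂ) ^ ((k : ℂ) / 2) * z ^ (-((k : ℂ) / 2 + 1)) *
    (jacobiTheta (Complex.I * π / z) ^ k - 1)

theorem im_I_mul_pi_div (z : ℂ) : (Complex.I * π / z).im = π * (z.re / ‖z‖ ^ 2) := by
  have : Complex.I * π / z = Complex.I * ((π : ℝ) * z⁻¹) := by ring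
  rw [this, Complex.I_mul_im, Complex.re_ofReal_mul, Complex.inv_re, Complex.normSq_eq_norm_sq]

theorem differentiableAt_thetaLaplace (k : ℕ) {z : ℂ} (hz : 0 < z.re) :
    DifferentiableAt ℂ (thetaLaplace k) z := by
  have hz0 : z ≠ 0 := by rintro rfl; simp at hz
  have hp := Real.pi_pos
  have him : 0 < (Complex.I * π / z).im := by
    rw [im_I_mul_pi_div]
    have := norm_pos_iff.2 hz0
    positivity
  unfold thetaLaplace
  have h1 : DifferentiableAt ℂ (fun z : ℂ => z ^ (-((k : ℂ) / 2 + 1))) z :=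
    differentiableAt_id.cpow_const (Or.inl hz)
  have h2 : DifferentiableAt ℂ (fun z : ℂ => jacobiTheta (Complex.I * π / z)) z :=
    DifferentiableAt.comp (f := fun z : ℂ => Complex.I * π / z) z (differentiableAt_jacobiTheta him)
      ((differentiableAt_const _).div differentiableAt_id hz0)
  fun_prop

theorem laplacePk_ofReal (k : ℕ) {s : ℝ} (hs : 0 < s) :
    laplacePk k 0 s = thetaLaplace k s := by
  have h := congrArg Complex.ofReal (integral_Pk_mul_exp k hs)
  rw [← integral_complex_ofReal] at h
  have hp : (π : ℂ) ≠ 0 := by exact_mod_cast Real.pi_ne_zero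
  rw [laplacePk, thetaLaplace]
  convert h using 1
  · congr 1
    ext t
    push_cast
    ring
  · rw [Complex.ofReal_mul, Complex.ofReal_mul, Complex.ofReal_sub, Complex.ofReal_pow,
      ofReal_tsum_exp_eq_jacobiTheta, Complex.ofReal_cpow Real.pi_pos.le, Complex.ofReal_cpow hs.le]
    have e : Complex.I * ((π ^ 2 / s : ℝ) : ℂ) / π = Complex.I * π / s := by
      push_cast
      field_simp
    rw [e]
    push_cast
    rfl

theorem laplacePk_eq (k : ℕ) {z : ℂ} (hz : 0 < z.re) : laplacePk k 0 z = thetaLaplace k z := by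
  have ho : IsOpen {z : ℂ | 0 < z.re} := isOpen_lt continuous_const Complex.continuous_re
  have h1 : AnalyticOnNhd ℂ (laplacePk k 0) {z : ℂ | 0 < z.re} :=
    DifferentiableOn.analyticOnNhd (fun w hw =>
      (hasDerivAt_laplacePk k 0 hw).differentiableAt.differentiableWithinAt) ho
  have h2 : AnalyticOnNhd ℂ (thetaLaplace k) {z : ℂ | 0 < z.re} :=
    DifferentiableOn.analyticOnNhd (fun w hw =>
      (differentiableAt_thetaLaplace k hw).differentiableWithinAt) ho
  have hconn : IsPreconnected {z : ℂ | 0 < z.re} :=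
    (convex_halfSpace_re_gt 0).isPreconnected
  refine h1.eqOn_of_preconnected_of_frequently_eq h2 hconn (z₀ := 1) (by simp) ?_ hz
  have ht : Tendsto (fun n : ℕ => (((1 : ℝ) + 1 / ((n : ℝ) + 1) : ℝ) : ℂ)) atTop (𝓝[≠] 1) := by
    rw [tendsto_nhdsWithin_iff]
    constructor
    · have := (tendsto_one_div_add_atTop_nhds_zero_nat (𝕜 := ℝ)).const_add 1
      rw [add_zero] at this
      simpa [Function.comp_def] using (Complex.continuous_ofReal.tendsto 1).comp this
    · refine Eventually.of_forall fun n => ?_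
      have : (0 : ℝ) < 1 / ((n : ℝ) + 1) := by positivity
      simp only [mem_compl_iff, mem_singleton_iff, Complex.ofReal_eq_one]
      linarith
  exact ht.frequently (Frequently.of_forall fun n => laplacePk_ofReal k (by positivity))

theorem norm_pow_sub_one_le (n : ℕ) {x : ℂ} {R : ℝ} (hR : 1 ≤ R) (hx : ‖x‖ ≤ R) :
    ‖x ^ n - 1‖ ≤ n * R ^ n * ‖x - 1‖ := by
  rw [← geom_sum_mul, norm_mul]
  gcongr
  refine (norm_sum_le _ _).trans ?_
  calc ∑ i ∈ Finset.range n, ‖x ^ i‖ ≤ ∑ i ∈ Finset.range n, R ^ n := by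
        refine Finset.sum_le_sum fun i hi => ?_
        rw [norm_pow]
        exact (pow_le_pow_left₀ (norm_nonneg _) hx i).trans
          (pow_le_pow_right₀ hR (Finset.mem_range.1 hi).le)
    _ = n * R ^ n := by simp

theorem norm_thetaLaplace_le (k : ℕ) {w : ℝ} (hw : 0 < w) (hw1 : w ≤ 1) {z : ℂ}
    (hz : ‖z - w‖ = w / 2) :
    ‖thetaLaplace k z‖ ≤
      π ^ ((k : ℝ) / 2) * (2 / w) ^ (k + 1) * (k * 5 ^ k * (4 * Real.exp (-(2 / w)))) := by
  have hre : w / 2 ≤ z.re := by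
    have h1 : |(z - w).re| ≤ w / 2 := (Complex.abs_re_le_norm _).trans_eq hz
    rw [Complex.sub_re, Complex.ofReal_re, abs_le] at h1
    linarith [h1.1]
  have hre0 : 0 < z.re := by linarith
  have hn1 : w / 2 ≤ ‖z‖ := hre.trans (Complex.re_le_norm z)
  have hn0 : 0 < ‖z‖ := by linarith
  have hn2 : ‖z‖ ≤ 3 * w / 2 := by
    have := norm_add_le (z - w) (w : ℂ)
    rw [sub_add_cancel, hz, Complex.norm_real, Real.norm_of_nonneg hw.le] at this
    linarith
  have hpi := Real.pi_gt_three
  have him := im_I_mul_pi_div z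
  have himpos : 0 < (Complex.I * π / z).im := by rw [him]; positivity
  have him2 : 2 / w ≤ π * (Complex.I * π / z).im := by
    rw [him]
    have h2 : 2 / (9 * w) ≤ z.re / ‖z‖ ^ 2 := by
      rw [div_le_div_iff₀ (by positivity) (by positivity)]
      nlinarith [mul_le_mul hn2 hn2 hn0.le (by linarith)]
    calc 2 / w = 9 * (2 / (9 * w)) := by field_simp
      _ ≤ (π * π) * (z.re / ‖z‖ ^ 2) := by
        gcongr
        nlinarith
      _ = _ := by ring
  have hq : Real.exp (-π * (Complex.I * π / z).im) ≤ Real.exp (-(2 / w)) :=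
    Real.exp_le_exp.2 (by linarith)
  have hq2 : Real.exp (-(2 / w)) ≤ 1 / 2 := by
    have h3 : (2 : ℝ) ≤ 2 / w := by rw [le_div_iff₀ hw]; linarith
    have h4 : (2 : ℝ) ≤ Real.exp (2 / w) := by linarith [Real.add_one_le_exp (2 / w)]
    rw [Real.exp_neg, one_div]
    exact inv_anti₀ (by norm_num) h4
  have hth : ‖jacobiTheta (Complex.I * π / z) - 1‖ ≤ 4 * Real.exp (-(2 / w)) := by
    refine (norm_jacobiTheta_sub_one_le himpos).trans ?_
    have h5 : 2 / (1 - Real.exp (-π * (Complex.I * π / z).im)) ≤ 4 := by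
      rw [div_le_iff₀ (by linarith)]
      linarith
    gcongr
  have hth5 : ‖jacobiTheta (Complex.I * π / z)‖ ≤ 5 := by
    have := norm_add_le (jacobiTheta (Complex.I * π / z) - 1) 1
    rw [sub_add_cancel, norm_one] at this
    linarith
  rw [thetaLaplace, norm_mul, norm_mul]
  have e1 : ‖(π : ℂ) ^ ((k : ℂ) / 2)‖ = π ^ ((k : ℝ) / 2) := by
    have : ((k : ℂ) / 2) = (((k : ℝ) / 2 : ℝ) : ℂ) := by push_cast; rfl
    rw [this, Complex.norm_cpow_real, Complex.norm_real, Real.norm_of_nonneg (by positivity)]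
  have e2 : ‖z ^ (-((k : ℂ) / 2 + 1))‖ ≤ (2 / w) ^ (k + 1) := by
    have : (-((k : ℂ) / 2 + 1)) = ((-((k : ℝ) / 2 + 1) : ℝ) : ℂ) := by push_cast; rfl
    rw [this, Complex.norm_cpow_real, Real.rpow_neg hn0.le, ← Real.inv_rpow hn0.le]
    have h6 : ‖z‖⁻¹ ≤ 2 / w := by
      rw [← inv_div]
      exact inv_anti₀ (by positivity) hn1
    calc ‖z‖⁻¹ ^ ((k : ℝ) / 2 + 1) ≤ (2 / w) ^ ((k : ℝ) / 2 + 1) := by gcongr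
      _ ≤ (2 / w) ^ (((k + 1 : ℕ) : ℝ)) := by
        refine Real.rpow_le_rpow_of_exponent_le ?_ ?_
        · rw [le_div_iff₀ hw]; linarith
        · have : (0 : ℝ) ≤ k := by positivity
          push_cast; linarith
      _ = _ := Real.rpow_natCast _ _
  rw [e1]
  have e3 := norm_pow_sub_one_le k (by norm_num) hth5
  gcongr
  exact e3.trans (by gcongr)

theorem norm_laplacePk_le_of_le_one (k j : ℕ) :
    ∃ C : ℝ, 0 < C ∧ ∀ w : ℝ, 0 < w → w ≤ 1 → ‖laplacePk k j w‖ ≤ C := by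
  refine ⟨(j.factorial : ℝ) * (π ^ ((k : ℝ) / 2) * (k * 5 ^ k * 4)) * (k + 1 + j).factorial + 1,
    by positivity, fun w hw hw1 => ?_⟩
  have hball : Metric.closedBall (w : ℂ) (w / 2) ⊆ {z : ℂ | 0 < z.re} := by
    intro z hz
    rw [Metric.mem_closedBall, dist_eq_norm] at hz
    have h1 : |(z - w).re| ≤ w / 2 := (Complex.abs_re_le_norm _).trans hz
    rw [Complex.sub_re, Complex.ofReal_re, abs_le] at h1
    simp only [mem_ofPred_eq]
    linarith [h1.1]
  have hd : DiffContOnCl ℂ (laplacePk k 0) (Metric.ball (w : ℂ) (w / 2)) := by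
    apply DifferentiableOn.diffContOnCl
    rw [closure_ball _ (by positivity)]
    exact fun z hz => (hasDerivAt_laplacePk k 0 (hball hz)).differentiableAt.differentiableWithinAt
  have h := Complex.norm_iteratedDeriv_le_of_forall_mem_sphere_norm_le j (half_pos hw) hd
    (C := π ^ ((k : ℝ) / 2) * (2 / w) ^ (k + 1) * (k * 5 ^ k * (4 * Real.exp (-(2 / w)))))
    (fun z hz => by
      rw [laplacePk_eq k (hball (Metric.sphere_subset_closedBall hz))]
      exact norm_thetaLaplace_le k hw hw1 (by rwa [mem_sphere_iff_norm] at hz))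
  rw [iteratedDeriv_laplacePk k j (by simpa using hw)] at h
  refine h.trans ?_
  set y := 2 / w with hy
  have hy0 : 0 < y := by positivity
  have hyw : w / 2 = y⁻¹ := by rw [hy, inv_div]
  have hexp : y ^ (k + 1 + j) * Real.exp (-y) ≤ (k + 1 + j).factorial := by
    have := Real.pow_div_factorial_le_exp y hy0.le (k + 1 + j)
    rw [div_le_iff₀ (by positivity)] at this
    rw [Real.exp_neg, ← div_eq_mul_inv, div_le_iff₀ (Real.exp_pos _)]
    linarith
  rw [hyw, inv_pow, div_inv_eq_mul]
  calc _ = (j.factorial : ℝ) * (π ^ ((k : ℝ) / 2) * (k * 5 ^ k * 4)) *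
        (y ^ (k + 1 + j) * Real.exp (-y)) := by rw [pow_add y (k + 1) j]; ring
    _ ≤ (j.factorial : ℝ) * (π ^ ((k : ℝ) / 2) * (k * 5 ^ k * 4)) * (k + 1 + j).factorial := by
      gcongr
    _ ≤ _ := by linarith

theorem laplacePk_ofReal_eq (k j : ℕ) (w : ℝ) :
    laplacePk k j w =
      (((-1) ^ j * ∫ t in Ioi (0 : ℝ), Pk k t * (t ^ j * Real.exp (-(w * t))) : ℝ) : ℂ) := by
  rw [← integral_const_mul, ← integral_complex_ofReal, laplacePk]
  congr 1
  ext t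
  push_cast
  rw [neg_pow (t : ℂ) j]
  ring

theorem abs_integral_Pk_pow_eq (k j : ℕ) (w : ℝ) :
    |∫ t in Ioi (0 : ℝ), Pk k t * (t ^ j * Real.exp (-(w * t)))| = ‖laplacePk k j w‖ := by
  rw [laplacePk_ofReal_eq, Complex.norm_real, Real.norm_eq_abs, abs_mul, abs_pow, abs_neg, abs_one,
    one_pow, one_mul]

theorem norm_laplacePk_le_of_one_le (k j : ℕ) :
    ∃ C : ℝ, 0 < C ∧ ∀ w : ℝ, 1 ≤ w → ‖laplacePk k j w‖ ≤ C * w ^ (-((j : ℝ) + 1)) := by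
  obtain ⟨C, hC, hP⟩ := abs_Pk_le k
  have hj : (0 : ℝ) ≤ j := by positivity
  have hk : (0 : ℝ) ≤ k := by positivity
  have hG1 := Real.Gamma_pos_of_pos (show (0 : ℝ) < j + 1 by positivity)
  have hG2 := Real.Gamma_pos_of_pos (show (0 : ℝ) < j + k / 2 + 1 by positivity)
  refine ⟨C * (Real.Gamma (j + 1) + Real.Gamma (j + k / 2 + 1)), by positivity, fun w hw => ?_⟩
  have hw0 : 0 < w := by linarith
  have i1 := integrableOn_rpow_mul_exp (b := j) (by linarith) hw0
  have i2 := integrableOn_rpow_mul_exp (b := j + k / 2) (by linarith) hw0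
  have h : ‖∫ t in Ioi (0 : ℝ), Pk k t * (t ^ j * Real.exp (-(w * t)))‖ ≤
      ∫ t in Ioi (0 : ℝ), C * (t ^ (j : ℝ) * Real.exp (-(w * t)) +
        t ^ ((j : ℝ) + k / 2) * Real.exp (-(w * t))) := by
    refine norm_integral_le_of_norm_le ((i1.add i2).const_mul C) ?_
    refine (ae_restrict_mem measurableSet_Ioi).mono fun t (ht : 0 < t) => ?_
    have h2 : 0 ≤ t ^ j * Real.exp (-(w * t)) := by positivity
    rw [norm_mul, Real.norm_eq_abs, Real.norm_of_nonneg h2, Real.rpow_add ht, Real.rpow_natCast]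
    refine (mul_le_mul_of_nonneg_right (hP t ht.le) h2).trans_eq ?_
    ring
  rw [← abs_integral_Pk_pow_eq, ← Real.norm_eq_abs]
  refine h.trans ?_
  rw [integral_const_mul, integral_add i1 i2, integral_rpow_mul_exp (by linarith) hw0,
    integral_rpow_mul_exp (by linarith) hw0, mul_assoc, add_mul]
  have : w ^ (-((j : ℝ) + k / 2 + 1)) ≤ w ^ (-((j : ℝ) + 1)) :=
    Real.rpow_le_rpow_of_exponent_le hw (by linarith)
  gcongr

/-- The Laplace transform of the discrepancy against any power `t ^ b` with `b > -1` is bounded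
near the origin. -/
theorem abs_integral_Pk_rpow_le (k : ℕ) {b : ℝ} (hb : -1 < b) :
    ∃ C : ℝ, 0 < C ∧ ∀ s : ℝ, 0 < s →
      |∫ t in Ioi (0 : ℝ), Pk k t * (t ^ b * Real.exp (-(s * t)))| ≤ C := by
  obtain ⟨j, hj⟩ := exists_nat_gt b
  obtain ⟨C₁, hC₁, hM₁⟩ := norm_laplacePk_le_of_le_one k j
  obtain ⟨C₂, hC₂, hM₂⟩ := norm_laplacePk_le_of_one_le k j
  set c := (j : ℝ) - b with hc
  have hc0 : 0 < c := by linarith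
  have hG := Real.Gamma_pos_of_pos hc0
  have hj0 : (0 : ℝ) ≤ j := by positivity
  set g : ℝ → ℝ := (Ioc (0 : ℝ) 1).indicator (fun w => (C₁ + C₂) * w ^ (c - 1)) +
    (Ioi (1 : ℝ)).indicator (fun w => C₂ * w ^ (-2 - b)) with hg
  have hgi : IntegrableOn g (Ioi 0) := by
    apply Integrable.integrableOn
    refine Integrable.add ?_ ?_
    · rw [integrable_indicator_iff measurableSet_Ioc,
        ← intervalIntegrable_iff_integrableOn_Ioc_of_le zero_le_one]
      exact (intervalIntegral.intervalIntegrable_rpow' (by linarith)).const_mul _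
    · rw [integrable_indicator_iff measurableSet_Ioi]
      exact (integrableOn_Ioi_rpow_of_lt (by linarith) one_pos).const_mul _
  refine ⟨(Real.Gamma c)⁻¹ * (∫ w in Ioi (0 : ℝ), g w) + 1, ?_, fun s hs => ?_⟩
  · have : 0 ≤ ∫ w in Ioi (0 : ℝ), g w := by
      refine setIntegral_nonneg measurableSet_Ioi fun w (hw : 0 < w) => ?_
      exact add_nonneg (indicator_apply_nonneg fun _ => by positivity)
        (indicator_apply_nonneg fun _ => by positivity)
    positivity
  have hexp (t w : ℝ) : Real.exp (-(s * t)) * Real.exp (-(t * w)) = Real.exp (-((s + w) * t)) := by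
    rw [← Real.exp_add]
    ring_nf
  set F : ℝ → ℝ → ℝ := fun t w =>
    Pk k t * (t ^ j * Real.exp (-(s * t))) * (w ^ (c - 1) * Real.exp (-(t * w))) with hF
  have hw_int (t : ℝ) (ht : 0 < t) : ∫ w in Ioi (0 : ℝ), w ^ (c - 1) * Real.exp (-(t * w)) =
      Real.Gamma c * t ^ (-c) := by
    rw [integral_rpow_mul_exp (by linarith) ht, sub_add_cancel]
  have hpow (t : ℝ) (ht : 0 < t) : t ^ b = t ^ j * t ^ (-c) := by
    rw [← Real.rpow_natCast, ← Real.rpow_add ht, hc]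
    congr 1
    ring
  have h1 : ∫ t in Ioi (0 : ℝ), Pk k t * (t ^ b * Real.exp (-(s * t))) =
      (Real.Gamma c)⁻¹ * ∫ t in Ioi (0 : ℝ), ∫ w in Ioi (0 : ℝ), F t w := by
    rw [← integral_const_mul]
    refine setIntegral_congr_fun measurableSet_Ioi fun t (ht : 0 < t) => ?_
    simp only [hF]
    rw [integral_const_mul, hw_int t ht, hpow t ht]
    field_simp
  have hFi : Integrable (Function.uncurry F)
      ((volume.restrict (Ioi (0 : ℝ))).prod (volume.restrict (Ioi (0 : ℝ)))) := by
    have hmeas : Measurable (Function.uncurry F) := by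
      have := measurable_Pk k
      simp only [hF, Function.uncurry_def]
      fun_prop
    rw [integrable_prod_iff hmeas.aestronglyMeasurable]
    constructor
    · refine (ae_restrict_mem measurableSet_Ioi).mono fun t (ht : 0 < t) => ?_
      exact (integrableOn_rpow_mul_exp (b := c - 1) (by linarith) ht).const_mul
        (Pk k t * (t ^ j * Real.exp (-(s * t))))
    · refine ((integrableOn_Pk_mul k hb hs).norm.const_mul (Real.Gamma c)).congr ?_
      refine (ae_restrict_mem measurableSet_Ioi).mono fun t (ht : 0 < t) => ?_
      have h2 : ∀ w ∈ Ioi (0 : ℝ), ‖Function.uncurry F (t, w)‖ =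
          |Pk k t| * (t ^ j * Real.exp (-(s * t))) * (w ^ (c - 1) * Real.exp (-(t * w))) := by
        intro w (hw : 0 < w)
        simp only [hF, Function.uncurry_apply_pair]
        rw [norm_mul, norm_mul, Real.norm_eq_abs,
          Real.norm_of_nonneg (show 0 ≤ t ^ j * Real.exp (-(s * t)) by positivity),
          Real.norm_of_nonneg (show 0 ≤ w ^ (c - 1) * Real.exp (-(t * w)) by positivity)]
      simp only
      rw [setIntegral_congr_fun measurableSet_Ioi h2, integral_const_mul, hw_int t ht, norm_mul,
        Real.norm_eq_abs, Real.norm_of_nonneg (by positivity), hpow t ht]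
      ring
  rw [h1, integral_integral_swap hFi, abs_mul, abs_of_pos (inv_pos.2 hG)]
  have h3 : ‖∫ w in Ioi (0 : ℝ), ∫ t in Ioi (0 : ℝ), F t w‖ ≤ ∫ w in Ioi (0 : ℝ), g w := by
    refine norm_integral_le_of_norm_le hgi ?_
    refine (ae_restrict_mem measurableSet_Ioi).mono fun w (hw : 0 < w) => ?_
    have h4 : ∫ t in Ioi (0 : ℝ), F t w = w ^ (c - 1) *
        ∫ t in Ioi (0 : ℝ), Pk k t * (t ^ j * Real.exp (-((s + w) * t))) := by
      rw [← integral_const_mul]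
      congr 1
      ext t
      simp only [hF]
      rw [← hexp]
      ring
    rw [h4, norm_mul, Real.norm_of_nonneg (by positivity), Real.norm_eq_abs,
      abs_integral_Pk_pow_eq]
    simp only [hg, Pi.add_apply]
    rcases le_or_gt w 1 with hw1 | hw1
    · rw [indicator_of_mem (show w ∈ Ioc (0 : ℝ) 1 from ⟨hw, hw1⟩),
        indicator_of_notMem (by simpa using hw1), add_zero, mul_comm]
      gcongr
      rcases le_or_gt (s + w) 1 with h5 | h5
      · linarith [hM₁ (s + w) (by linarith) h5]
      · refine (hM₂ (s + w) h5.le).trans ?_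
        have : (s + w) ^ (-((j : ℝ) + 1)) ≤ 1 :=
          Real.rpow_le_one_of_one_le_of_nonpos h5.le (by linarith)
        nlinarith
    · rw [indicator_of_notMem (fun h : w ∈ Ioc (0 : ℝ) 1 => absurd h.2 (not_le.2 hw1)),
        indicator_of_mem (show w ∈ Ioi (1 : ℝ) from hw1), zero_add]
      have e : C₂ * w ^ (-2 - b) = w ^ (c - 1) * (C₂ * w ^ (-((j : ℝ) + 1))) := by
        rw [mul_left_comm, ← Real.rpow_add hw, hc]
        congr 2
        ring
      rw [e]
      have : (s + w) ^ (-((j : ℝ) + 1)) ≤ w ^ (-((j : ℝ) + 1)) :=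
        Real.rpow_le_rpow_of_nonpos hw (by linarith) (by linarith)
      refine mul_le_mul_of_nonneg_left ((hM₂ (s + w) (by linarith)).trans ?_) (by positivity)
      gcongr
  rw [Real.norm_eq_abs] at h3
  have := mul_le_mul_of_nonneg_left h3 (inv_pos.2 hG).le
  linarith

theorem natCast_floor_eq_of_mem_Ico {n : ℕ} {t : ℝ} (h : t ∈ Ico (n : ℝ) (n + 1)) :
    (⌊t⌋ : ℝ) = n := by
  have : ⌊t⌋ = (n : ℤ) := Int.floor_eq_iff.2 ⟨by simpa using h.1, by simpa using h.2⟩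
  simp [this]

theorem setIntegral_Ioi_one_eq_zero_of_floor {g G : ℝ → ℝ → ℝ}
    (hderiv : ∀ n : ℕ, 1 ≤ n → ∀ t ∈ Icc (n : ℝ) (n + 1), HasDerivAt (G n) (g n t) t)
    (hend : ∀ n : ℕ, 1 ≤ n → G n (n + 1) = G n n)
    (hint : IntegrableOn (fun t => g ⌊t⌋ t) (Ioi 1)) :
    ∫ t in Ioi (1 : ℝ), g ⌊t⌋ t = 0 := by
  have hcongr (n : ℕ) : (Ioo (n : ℝ) (n + 1)).EqOn (fun t => g ⌊t⌋ t) (g n) := fun t ht => by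
    simp only [natCast_floor_eq_of_mem_Ico (Ioo_subset_Ico_self ht)]
  have hii (n : ℕ) (hn : 1 ≤ n) :
      IntervalIntegrable (fun t => g ⌊t⌋ t) volume (n : ℝ) (n + 1) := by
    rw [intervalIntegrable_iff_integrableOn_Ioc_of_le (by linarith)]
    refine hint.mono_set fun t ht => lt_of_le_of_lt ?_ ht.1
    exact_mod_cast hn
  have hpiece (n : ℕ) (hn : 1 ≤ n) : ∫ t in (n : ℝ)..(n + 1), g ⌊t⌋ t = 0 := by
    rw [intervalIntegral.integral_congr_Ioo_of_le (by linarith) (hcongr n),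
      intervalIntegral.integral_eq_sub_of_hasDerivAt (f := G n), hend n hn, sub_self]
    · rw [uIcc_of_le (by linarith)]
      exact hderiv n hn
    · have := hii n hn
      rw [intervalIntegrable_iff_integrableOn_Ioo_of_le (by linarith)] at this ⊢
      exact this.congr_fun (hcongr n) measurableSet_Ioo
  have hlim := intervalIntegral_tendsto_integral_Ioi (1 : ℝ) hint
    (tendsto_natCast_atTop_atTop.comp (tendsto_add_atTop_nat 1))
  have hzero (N : ℕ) : ∫ t in (1 : ℝ)..(((N + 1 : ℕ) : ℝ)), g ⌊t⌋ t = 0 := by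
    have := intervalIntegral.sum_integral_adjacent_intervals (μ := volume)
      (f := fun t => g ⌊t⌋ t) (a := fun n => ((n + 1 : ℕ) : ℝ)) (n := N)
      (fun n _ => by simpa using hii (n + 1) (by omega))
    simp only [zero_add, Nat.cast_one] at this
    rw [← this]
    exact Finset.sum_eq_zero fun n _ => by simpa using hpiece (n + 1) (by omega)
  refine tendsto_nhds_unique hlim ?_
  simp only [Function.comp_def, hzero, tendsto_const_nhds]

theorem one_le_floor_of_one_le {t : ℝ} (ht : 1 ≤ t) : (1 : ℝ) ≤ ⌊t⌋ := by
  exact_mod_cast Int.le_floor.2 (by simpa using ht)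

theorem rpow_floor_le {a t : ℝ} (ha : 0 ≤ a) (ht : 1 ≤ t) : (⌊t⌋ : ℝ) ^ a ≤ t ^ a :=
  Real.rpow_le_rpow (by linarith [one_le_floor_of_one_le ht]) (Int.floor_le t) ha

theorem rpow_sub_rpow_floor_le {a t : ℝ} (ha : 1 ≤ a) (ht : 1 ≤ t) :
    t ^ a - (⌊t⌋ : ℝ) ^ a ≤ a * t ^ (a - 1) := by
  have hn := one_le_floor_of_one_le ht
  have h1 := Int.floor_le t
  have h2 := Int.lt_floor_add_one t
  have ht0 : 0 < t := by linarith
  have h3 : -1 ≤ (⌊t⌋ - t) / t := by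
    rw [le_div_iff₀ ht0]
    linarith
  have h4 := one_add_mul_self_le_rpow_one_add h3 ha
  have h5 : 1 + (⌊t⌋ - t) / t = ⌊t⌋ / t := by
    field_simp
    ring
  rw [h5, Real.div_rpow (by linarith) ht0.le, le_div_iff₀ (by positivity)] at h4
  have h6 : t ^ a = t * t ^ (a - 1) := by
    rw [Real.rpow_sub_one ht0.ne']
    field_simp
  have h7 : (1 + a * ((⌊t⌋ - t) / t)) * t ^ a = t ^ a - a * (t - ⌊t⌋) * t ^ (a - 1) := by
    rw [h6]
    field_simp
    ring
  have h8 : a * (t - ⌊t⌋) * t ^ (a - 1) ≤ a * 1 * t ^ (a - 1) := by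
    gcongr
    linarith
  linarith

/-- The function `t ^ b * exp (-(s t))`. -/
noncomputable def powExp (s b t : ℝ) : ℝ := t ^ b * Real.exp (-(s * t))

theorem powExp_nonneg (s b : ℝ) {t : ℝ} (ht : 0 ≤ t) : 0 ≤ powExp s b t := by
  unfold powExp
  positivity

theorem rpow_mul_powExp (s a b : ℝ) {t : ℝ} (ht : 0 < t) :
    t ^ a * powExp s b t = powExp s (a + b) t := by
  rw [powExp, powExp, Real.rpow_add ht, mul_assoc]

@[fun_prop]
theorem measurable_powExp (s b : ℝ) : Measurable (powExp s b) := by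
  unfold powExp
  fun_prop

theorem hasDerivAt_powExp (s b : ℝ) {t : ℝ} (ht : 0 < t) :
    HasDerivAt (powExp s b) (b * powExp s (b - 1) t - s * powExp s b t) t := by
  have h1 := Real.hasDerivAt_rpow_const (x := t) (p := b) (Or.inl ht.ne')
  have h2 : HasDerivAt (fun t => Real.exp (-(s * t))) (Real.exp (-(s * t)) * (-(s * 1))) t :=
    (((hasDerivAt_id t).const_mul s).neg).exp
  refine (h1.mul h2).congr_deriv ?_
  simp only [powExp]
  ring

theorem integrableOn_powExp {s b : ℝ} (hb : -1 < b) (hs : 0 < s) :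
    IntegrableOn (powExp s b) (Ioi 0) := integrableOn_rpow_mul_exp hb hs

theorem setIntegral_powExp {s b : ℝ} (hb : -1 < b) (hs : 0 < s) :
    ∫ t in Ioi (0 : ℝ), powExp s b t = Real.Gamma (b + 1) * s ^ (-(b + 1)) :=
  integral_rpow_mul_exp hb hs

theorem integrableOn_Pk_mul_powExp (k : ℕ) {s b : ℝ} (hb : -1 < b) (hs : 0 < s) :
    IntegrableOn (fun t => Pk k t * powExp s b t) (Ioi 0) := integrableOn_Pk_mul k hb hs

theorem setIntegral_Ioc_add_Ioi {f : ℝ → ℝ} (hf : IntegrableOn f (Ioi 0)) :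
    ∫ t in Ioi (0 : ℝ), f t = (∫ t in Ioc (0 : ℝ) 1, f t) + ∫ t in Ioi (1 : ℝ), f t := by
  rw [← Ioc_union_Ioi_eq_Ioi (zero_le_one (α := ℝ))] at hf ⊢
  exact setIntegral_union (Ioc_disjoint_Ioi le_rfl) measurableSet_Ioi
    (hf.mono_set subset_union_left) (hf.mono_set subset_union_right)

theorem abs_setIntegral_Ioc_zero_one_le {f : ℝ → ℝ} {C : ℝ} (h : ∀ t ∈ Ioc (0 : ℝ) 1, |f t| ≤ C) :
    |∫ t in Ioc (0 : ℝ) 1, f t| ≤ C := by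
  have := norm_setIntegral_le_of_norm_le_const (μ := volume) (s := Ioc (0 : ℝ) 1) (f := f)
    (C := C) (by simp) h
  simpa using this

theorem exists_abs_setIntegral_Pk_mul_powExp_le (k : ℕ) {b : ℝ} (hb : -1 < b) :
    ∃ C, 0 < C ∧ ∀ s, 0 < s → |∫ t in Ioi (1 : ℝ), Pk k t * powExp s b t| ≤ C := by
  obtain ⟨C₁, hC₁, h₁⟩ := abs_integral_Pk_rpow_le k hb
  obtain ⟨C₂, hC₂, h₂⟩ := abs_Pk_le k
  have hpi : IntegrableOn (fun t : ℝ => 2 * C₂ * t ^ b) (Ioc 0 1) :=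
    ((intervalIntegral.intervalIntegrable_rpow' hb (a := 0) (b := 1)).1).const_mul _
  refine ⟨C₁ + |∫ t in Ioc (0 : ℝ) 1, 2 * C₂ * t ^ b|, by positivity, fun s hs => ?_⟩
  have h3 := setIntegral_Ioc_add_Ioi (integrableOn_Pk_mul_powExp k hb hs)
  have h4 := h₁ s hs
  have h5 : ‖∫ t in Ioc (0 : ℝ) 1, Pk k t * powExp s b t‖ ≤
      ∫ t in Ioc (0 : ℝ) 1, 2 * C₂ * t ^ b := by
    refine norm_integral_le_of_norm_le hpi ?_
    refine (ae_restrict_mem measurableSet_Ioc).mono fun t ht => ?_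
    have h6 := h₂ t ht.1.le
    have h7 : t ^ ((k : ℝ) / 2) ≤ 1 := Real.rpow_le_one ht.1.le ht.2 (by positivity)
    have h8 : Real.exp (-(s * t)) ≤ 1 := Real.exp_le_one_iff.2 (by nlinarith [ht.1])
    have h9 : 0 ≤ t ^ b := Real.rpow_nonneg ht.1.le b
    rw [norm_mul, Real.norm_eq_abs, Real.norm_of_nonneg (powExp_nonneg s b ht.1.le)]
    refine mul_le_mul (by nlinarith) ?_ (powExp_nonneg s b ht.1.le) (by positivity)
    exact mul_le_of_le_one_right h9 h8
  rw [Real.norm_eq_abs] at h5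
  have h10 := le_abs_self (∫ t in Ioc (0 : ℝ) 1, 2 * C₂ * t ^ b)
  simp only [powExp] at *
  rw [h3] at h4
  rw [abs_le] at *
  constructor <;> linarith

theorem abs_setIntegral_Ioi_one_powExp_sub_le {s b : ℝ} (hb : 0 ≤ b) (hs : 0 < s) :
    |(∫ t in Ioi (1 : ℝ), powExp s b t) - Real.Gamma (b + 1) * s ^ (-(b + 1))| ≤ 1 := by
  have h1 := setIntegral_Ioc_add_Ioi (integrableOn_powExp (b := b) (by linarith) hs)
  have h2 : |∫ t in Ioc (0 : ℝ) 1, powExp s b t| ≤ 1 := by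
    refine abs_setIntegral_Ioc_zero_one_le fun t ht => ?_
    rw [abs_of_nonneg (powExp_nonneg s b ht.1.le)]
    exact mul_le_one₀ (Real.rpow_le_one ht.1.le ht.2 hb) (Real.exp_pos _).le
      (Real.exp_le_one_iff.2 (by nlinarith [ht.1]))
  rw [setIntegral_powExp (by linarith) hs] at h1
  rw [h1, abs_le] at *
  constructor <;> linarith

/-- The mean value of `exp (-(s u))` over the unit interval. -/
noncomputable def meanExp (s : ℝ) : ℝ := (1 - Real.exp (-s)) / s

theorem abs_meanExp_sub_le {s : ℝ} (hs : 0 < s) (hs1 : s ≤ 1) :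
    |meanExp s - (1 - s / 2)| ≤ s ^ 2 / 4 := by
  have h := Real.exp_bound (x := -s) (by rwa [abs_neg, abs_of_pos hs]) (n := 3) (by norm_num)
  norm_num [Finset.sum_range_succ, Nat.factorial, abs_of_pos hs] at h
  have e : meanExp s - (1 - s / 2) = -(Real.exp (-s) - (1 + -s + s ^ 2 / 2)) / s := by
    unfold meanExp
    field_simp
    ring
  rw [e, abs_div, abs_neg, abs_of_pos hs, div_le_iff₀ hs]
  have : 0 < s ^ 3 := by positivity
  nlinarith

theorem meanExp_mem {s : ℝ} (hs : 0 < s) (hs1 : s ≤ 1) : meanExp s ∈ Icc 0 1 := by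
  have h := abs_le.1 (abs_meanExp_sub_le hs hs1)
  constructor <;> nlinarith

/-- The first derivative of `powExp s a`. -/
noncomputable def powExpDeriv (s a t : ℝ) : ℝ := a * powExp s (a - 1) t - s * powExp s a t

/-- The second derivative of `powExp s a`. -/
noncomputable def powExpDeriv2 (s a t : ℝ) : ℝ :=
  a * (a - 1) * powExp s (a - 2) t - 2 * s * a * powExp s (a - 1) t + s ^ 2 * powExp s a t

/-- The third derivative of `powExp s a`. -/
noncomputable def powExpDeriv3 (s a t : ℝ) : ℝ :=
  a * (a - 1) * (a - 2) * powExp s (a - 3) t - 3 * s * (a * (a - 1)) * powExp s (a - 2) t +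
    3 * s ^ 2 * a * powExp s (a - 1) t - s ^ 3 * powExp s a t

theorem hasDerivAt_powExpDeriv (s a : ℝ) {t : ℝ} (ht : 0 < t) :
    HasDerivAt (powExpDeriv s a) (powExpDeriv2 s a t) t := by
  refine (((hasDerivAt_powExp s (a - 1) ht).const_mul a).sub
    ((hasDerivAt_powExp s a ht).const_mul s)).congr_deriv ?_
  rw [powExpDeriv2, show a - 1 - 1 = a - 2 by ring]
  ring

theorem hasDerivAt_powExpDeriv2 (s a : ℝ) {t : ℝ} (ht : 0 < t) :
    HasDerivAt (powExpDeriv2 s a) (powExpDeriv3 s a t) t := by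
  refine ((((hasDerivAt_powExp s (a - 2) ht).const_mul (a * (a - 1))).sub
    ((hasDerivAt_powExp s (a - 1) ht).const_mul (2 * s * a))).add
    ((hasDerivAt_powExp s a ht).const_mul (s ^ 2))).congr_deriv ?_
  rw [powExpDeriv3, show a - 1 - 1 = a - 2 by ring, show a - 2 - 1 = a - 3 by ring]
  ring

/-- The periodised cubic weight in the Euler–Maclaurin remainder. -/
noncomputable def cubicWeight (u : ℝ) : ℝ := u * (1 - u) * (1 - 2 * u) / 12

theorem abs_cubicWeight_le {u : ℝ} (h0 : 0 ≤ u) (h1 : u ≤ 1) : |cubicWeight u| ≤ 1 := by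
  unfold cubicWeight
  have h2 : 0 ≤ u * (1 - u) := mul_nonneg h0 (by linarith)
  have h3 : u * (1 - u) ≤ 1 := by nlinarith
  rw [abs_le]
  constructor <;> nlinarith

/-- The mean-zero part of `(n ^ a - t ^ a) exp (-(s t))` on `[n, n + 1]`. -/
noncomputable def stepDiff (s a n t : ℝ) : ℝ :=
  n ^ a * Real.exp (-(s * t)) - meanExp s * (powExp s a t - powExpDeriv s a t / 2 +
    powExpDeriv2 s a t / 12 + cubicWeight (t - n) * powExpDeriv3 s a t)

/-- An antiderivative of `stepDiff s a n`. -/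
noncomputable def stepDiffPrim (s a n t : ℝ) : ℝ :=
  -(n ^ a * Real.exp (-(s * t)) / s) - meanExp s * ((t - n - 1) * powExp s a t +
    ((t - n) - (t - n) ^ 2) / 2 * powExpDeriv s a t + cubicWeight (t - n) * powExpDeriv2 s a t)

theorem hasDerivAt_stepDiffPrim {s : ℝ} (hs : 0 < s) (a n : ℝ) {t : ℝ} (ht : 0 < t) :
    HasDerivAt (stepDiffPrim s a n) (stepDiff s a n t) t := by
  have hexp : HasDerivAt (fun t => Real.exp (-(s * t))) (Real.exp (-(s * t)) * (-(s * 1))) t :=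
    (((hasDerivAt_id t).const_mul s).neg).exp
  have hu : HasDerivAt (fun t => t - n) 1 t := (hasDerivAt_id t).sub_const n
  have hw : HasDerivAt (fun t => cubicWeight (t - n))
      ((1 - 6 * (t - n) + 6 * (t - n) ^ 2) / 12) t := by
    refine (((hu.mul (hu.const_sub 1)).mul
      ((hu.const_mul 2).const_sub 1)).div_const 12).congr_deriv ?_
    simp only [Pi.mul_apply]
    ring
  refine ((((hexp.const_mul (n ^ a)).div_const s).neg).sub
    (((((hu.sub_const 1).mul (hasDerivAt_powExp s a ht)).add
      (((hu.sub (hu.pow 2)).div_const 2).mul (hasDerivAt_powExpDeriv s a ht))).add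
      (hw.mul (hasDerivAt_powExpDeriv2 s a ht))).const_mul (meanExp s))).congr_deriv ?_
  simp only [stepDiff, powExpDeriv, Pi.pow_apply, Pi.sub_apply]
  field_simp
  ring

theorem stepDiffPrim_add_one {s : ℝ} (hs : 0 < s) (a n : ℝ) :
    stepDiffPrim s a n (n + 1) = stepDiffPrim s a n n := by
  have h : Real.exp (-(s * (n + 1))) = Real.exp (-(s * n)) * Real.exp (-s) := by
    rw [← Real.exp_add]
    ring_nf
  simp only [stepDiffPrim, meanExp, cubicWeight, powExp, h]
  field_simp
  ring

/-- The mean-zero part of `(t ^ a - n ^ a) * powExp s (a - 1) t` on `[n, n + 1]`. -/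
noncomputable def stepProd (s a n t : ℝ) : ℝ :=
  (t ^ a - n ^ a) * powExp s (a - 1) t - a / 2 * powExp s (2 * a - 2) t -
    (1 - (t - n)) * (t ^ a - n ^ a) * powExpDeriv s (a - 1) t +
    a * (((t - n) - (t - n) ^ 2) / 2) * powExpDeriv s (2 * a - 2) t

/-- An antiderivative of `stepProd s a n`. -/
noncomputable def stepProdPrim (s a n t : ℝ) : ℝ :=
  (t - n - 1) * (t ^ a - n ^ a) * powExp s (a - 1) t +
    a * (((t - n) - (t - n) ^ 2) / 2) * powExp s (2 * a - 2) t

theorem hasDerivAt_stepProdPrim (s a n : ℝ) {t : ℝ} (ht : 0 < t) :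
    HasDerivAt (stepProdPrim s a n) (stepProd s a n t) t := by
  have hu : HasDerivAt (fun t => t - n) 1 t := (hasDerivAt_id t).sub_const n
  have hp : HasDerivAt (fun t => t ^ a - n ^ a) (a * t ^ (a - 1)) t :=
    (Real.hasDerivAt_rpow_const (Or.inl ht.ne')).sub_const _
  refine ((((hu.sub_const 1).mul hp).mul (hasDerivAt_powExp s (a - 1) ht)).add
    ((((hu.sub (hu.pow 2)).div_const 2).const_mul a).mul
      (hasDerivAt_powExp s (2 * a - 2) ht))).congr_deriv ?_
  have h := rpow_mul_powExp s (a - 1) (a - 1) ht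
  rw [show a - 1 + (a - 1) = 2 * a - 2 by ring] at h
  simp only [stepProd, powExpDeriv, Pi.pow_apply, Pi.sub_apply, Pi.mul_apply]
  linear_combination (t - n - 1) * a * h

theorem stepProdPrim_add_one (s a n : ℝ) : stepProdPrim s a n (n + 1) = stepProdPrim s a n n := by
  simp only [stepProdPrim]
  ring

/-- The smooth approximation of `(⌊t⌋ ^ a - t ^ a) exp (-(s t))`. -/
noncomputable def meanTerm (s a t : ℝ) : ℝ :=
  (meanExp s - 1) * powExp s a t - meanExp s / 2 * powExpDeriv s a t +
    meanExp s / 12 * powExpDeriv2 s a t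

theorem meanTerm_eq (s a t : ℝ) :
    meanTerm s a t = (meanExp s - 1 + meanExp s * s / 2 + meanExp s * s ^ 2 / 12) * powExp s a t -
      (meanExp s * a / 2 + meanExp s * s * a / 6) * powExp s (a - 1) t +
      meanExp s * (a * (a - 1)) / 12 * powExp s (a - 2) t := by
  simp only [meanTerm, powExpDeriv, powExpDeriv2]
  ring

theorem abs_meanExp_coeff_le {s : ℝ} (hs : 0 < s) (hs1 : s ≤ 1) :
    |meanExp s - 1 + meanExp s * s / 2 + meanExp s * s ^ 2 / 12| ≤ s ^ 2 := by
  have h := abs_le.1 (abs_meanExp_sub_le hs hs1)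
  have hm := meanExp_mem hs hs1
  obtain ⟨d, hd⟩ : ∃ d, meanExp s = 1 - s / 2 + d := ⟨meanExp s - (1 - s / 2), by ring⟩
  have e : meanExp s - 1 + meanExp s * s / 2 + meanExp s * s ^ 2 / 12 =
      d * (1 + s / 2) - s ^ 2 / 4 + meanExp s * s ^ 2 / 12 := by
    rw [hd]
    ring
  have h1 : -(s ^ 2 / 4) ≤ d := by linarith
  have h2 : d ≤ s ^ 2 / 4 := by linarith
  have h3 : 0 ≤ meanExp s * s ^ 2 := mul_nonneg hm.1 (sq_nonneg s)
  have h4 : meanExp s * s ^ 2 ≤ s ^ 2 := mul_le_of_le_one_left (sq_nonneg s) hm.2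
  rw [e, abs_le]
  constructor <;> nlinarith [mul_nonneg hs.le (sq_nonneg s)]

theorem abs_meanTerm_add_le {s a t : ℝ} (hs : 0 < s) (hs1 : s ≤ 1) (ha : 1 ≤ a) (ht : 0 ≤ t) :
    |meanTerm s a t + a / 2 * powExp s (a - 1) t| ≤
      a ^ 2 * (powExp s (a - 2) t + s * powExp s (a - 1) t + s ^ 2 * powExp s a t) := by
  have h := abs_le.1 (abs_meanExp_sub_le hs hs1)
  have hm := meanExp_mem hs hs1
  have e0 := powExp_nonneg s a ht
  have e1 := powExp_nonneg s (a - 1) ht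
  have e2 := powExp_nonneg s (a - 2) ht
  have c1 : |a / 2 - (meanExp s * a / 2 + meanExp s * s * a / 6)| ≤ a ^ 2 * s := by
    have : a / 2 - (meanExp s * a / 2 + meanExp s * s * a / 6) =
        a * ((1 - meanExp s) / 2 - meanExp s * s / 6) := by ring
    rw [this, abs_mul, abs_of_nonneg (by linarith), pow_two, mul_assoc]
    refine mul_le_mul_of_nonneg_left ?_ (by linarith)
    have h3 : 0 ≤ meanExp s * s := mul_nonneg hm.1 hs.le
    have h4 : meanExp s * s ≤ s := mul_le_of_le_one_left hs.le hm.2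
    have h5 : s ≤ a * s := le_mul_of_one_le_left hs.le ha
    have h6 : 1 - meanExp s ≤ s := by nlinarith
    rw [abs_le]
    constructor <;> linarith [hm.2]
  have c2 : |meanExp s * (a * (a - 1)) / 12| ≤ a ^ 2 := by
    have h1 : 0 ≤ a * (a - 1) := mul_nonneg (by linarith) (by linarith)
    have h2 : 0 ≤ meanExp s * (a * (a - 1)) := mul_nonneg hm.1 h1
    have h3 : meanExp s * (a * (a - 1)) ≤ a * (a - 1) := mul_le_of_le_one_left h1 hm.2
    rw [abs_of_nonneg (by linarith)]
    nlinarith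
  have c0 : |meanExp s - 1 + meanExp s * s / 2 + meanExp s * s ^ 2 / 12| ≤ a ^ 2 * s ^ 2 :=
    (abs_meanExp_coeff_le hs hs1).trans (le_mul_of_one_le_left (sq_nonneg s) (one_le_pow₀ ha))
  have e : meanTerm s a t + a / 2 * powExp s (a - 1) t =
      (meanExp s - 1 + meanExp s * s / 2 + meanExp s * s ^ 2 / 12) * powExp s a t +
      (a / 2 - (meanExp s * a / 2 + meanExp s * s * a / 6)) * powExp s (a - 1) t +
      meanExp s * (a * (a - 1)) / 12 * powExp s (a - 2) t := by
    rw [meanTerm_eq]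
    ring
  rw [e]
  refine (abs_add_three _ _ _).trans ?_
  rw [abs_mul, abs_mul, abs_mul, abs_of_nonneg e0, abs_of_nonneg e1, abs_of_nonneg e2]
  have := mul_le_mul_of_nonneg_right c0 e0
  have := mul_le_mul_of_nonneg_right c1 e1
  have := mul_le_mul_of_nonneg_right c2 e2
  linarith

/-- The majorant `(1 + s t + s² t² + s³ t³) t ^ (2 a - 3) exp (-(s t))` of the error terms. -/
noncomputable def majorant (s a t : ℝ) : ℝ :=
  powExp s (2 * a - 3) t + s * powExp s (2 * a - 2) t + s ^ 2 * powExp s (2 * a - 1) t +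
    s ^ 3 * powExp s (2 * a) t

/-- The error term of the decomposition of the integrand. -/
noncomputable def remTerm (k : ℕ) (s a t : ℝ) : ℝ :=
  Pk k ⌊t⌋ * (meanExp s * (cubicWeight (t - ⌊t⌋) * powExpDeriv3 s a t)) +
    Vk k * ((t ^ a - (⌊t⌋ : ℝ) ^ a) * (meanTerm s a t + a / 2 * powExp s (a - 1) t)) -
    a * Vk k / 2 * ((1 - (t - ⌊t⌋)) * (t ^ a - (⌊t⌋ : ℝ) ^ a) * powExpDeriv s (a - 1) t -
      a * (((t - ⌊t⌋) - (t - ⌊t⌋) ^ 2) / 2) * powExpDeriv s (2 * a - 2) t)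

/-- The part of the integrand whose integral over each `[n, n + 1]` vanishes. -/
noncomputable def stepTerm (k : ℕ) (s a n t : ℝ) : ℝ :=
  Pk k n * stepDiff s a n t - a * Vk k / 2 * stepProd s a n t

theorem integrand_eq (k : ℕ) (s t : ℝ) :
    Pk k ⌊t⌋ * ((⌊t⌋ : ℝ) ^ ((k : ℝ) / 2) - t ^ ((k : ℝ) / 2)) * Real.exp (-(s * t)) =
      stepTerm k s (k / 2) ⌊t⌋ t + Pk k t * meanTerm s (k / 2) t -
        (k / 2) ^ 2 * Vk k / 4 * powExp s (2 * (k / 2) - 2) t + remTerm k s (k / 2) t := by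
  have hP := Pk_floor k t
  simp only [stepTerm, stepDiff, stepProd, remTerm]
  have hm : (⌊t⌋ : ℝ) ^ ((k : ℝ) / 2) * Real.exp (-(s * t)) -
      t ^ ((k : ℝ) / 2) * Real.exp (-(s * t)) =
      stepDiff s (k / 2) ⌊t⌋ t + meanTerm s (k / 2) t +
        meanExp s * (cubicWeight (t - ⌊t⌋) * powExpDeriv3 s (k / 2) t) := by
    simp only [stepDiff, meanTerm]
    rw [show powExp s ((k : ℝ) / 2) t = t ^ ((k : ℝ) / 2) * Real.exp (-(s * t)) from rfl]
    ring
  simp only [stepDiff] at hm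
  linear_combination Pk k ⌊t⌋ * hm + meanTerm s (k / 2) t * hP

theorem abs_powExpDeriv_le {s a t : ℝ} (hs : 0 ≤ s) (ht : 0 ≤ t) :
    |powExpDeriv s a t| ≤ |a| * powExp s (a - 1) t + s * powExp s a t := by
  refine (abs_sub _ _).trans ?_
  rw [abs_mul, abs_mul, abs_of_nonneg (powExp_nonneg s (a - 1) ht),
    abs_of_nonneg (powExp_nonneg s a ht), abs_of_nonneg hs]

theorem abs_powExpDeriv3_le {s a t : ℝ} (hs : 0 ≤ s) (ht : 0 ≤ t) :
    |powExpDeriv3 s a t| ≤ (|a * (a - 1) * (a - 2)| + |3 * (a * (a - 1))| + |3 * a| + 1) *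
      (powExp s (a - 3) t + s * powExp s (a - 2) t + s ^ 2 * powExp s (a - 1) t +
        s ^ 3 * powExp s a t) := by
  have e0 := powExp_nonneg s a ht
  have e1 := powExp_nonneg s (a - 1) ht
  have e2 := powExp_nonneg s (a - 2) ht
  have e3 := powExp_nonneg s (a - 3) ht
  have e : powExpDeriv3 s a t = a * (a - 1) * (a - 2) * powExp s (a - 3) t +
      -(3 * (a * (a - 1))) * (s * powExp s (a - 2) t) + 3 * a * (s ^ 2 * powExp s (a - 1) t) +
      -1 * (s ^ 3 * powExp s a t) := by
    unfold powExpDeriv3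
    ring
  have f0 : 0 ≤ s ^ 3 * powExp s a t := by positivity
  have f1 : 0 ≤ s ^ 2 * powExp s (a - 1) t := by positivity
  have f2 : 0 ≤ s * powExp s (a - 2) t := by positivity
  rw [e]
  refine ((abs_add_le _ _).trans (add_le_add_left (abs_add_three _ _ _) _)).trans ?_
  simp only [abs_mul _ (powExp s (a - 3) t), abs_mul _ (s * powExp s (a - 2) t),
    abs_mul _ (s ^ 2 * powExp s (a - 1) t), abs_mul _ (s ^ 3 * powExp s a t), abs_neg,
    abs_of_nonneg e3, abs_of_nonneg f2, abs_of_nonneg f1, abs_of_nonneg f0, abs_one]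
  rw [add_mul, add_mul, add_mul]
  gcongr <;> linarith

theorem majorant_nonneg {s t : ℝ} (a : ℝ) (hs : 0 ≤ s) (ht : 0 ≤ t) : 0 ≤ majorant s a t := by
  have e (b : ℝ) := powExp_nonneg s b ht
  have := mul_nonneg hs (e (2 * a - 2))
  have := mul_nonneg (pow_nonneg hs 2) (e (2 * a - 1))
  have := mul_nonneg (pow_nonneg hs 3) (e (2 * a))
  linarith [e (2 * a - 3), majorant.eq_1 s a t]

theorem add_le_majorant {s t : ℝ} (a : ℝ) (hs : 0 ≤ s) (ht : 0 ≤ t) {A : ℝ} (hA : 0 ≤ A) :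
    A * powExp s (2 * a - 3) t + s * powExp s (2 * a - 2) t ≤ (A + 1) * majorant s a t := by
  have e (b : ℝ) := powExp_nonneg s b ht
  have := mul_nonneg hs (e (2 * a - 2))
  have := mul_nonneg (pow_nonneg hs 2) (e (2 * a - 1))
  have := mul_nonneg (pow_nonneg hs 3) (e (2 * a))
  have h := majorant.eq_1 s a t
  rw [add_mul, one_mul]
  refine add_le_add (mul_le_mul_of_nonneg_left ?_ hA) ?_ <;> linarith [e (2 * a - 3)]

theorem rpow_mul_abs_powExpDeriv_le {s a t : ℝ} (hs : 0 ≤ s) (ht : 0 < t) :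
    t ^ (a - 1) * |powExpDeriv s (a - 1) t| ≤ (|a - 1| + 1) * majorant s a t := by
  refine le_trans ?_ (add_le_majorant a hs ht.le (abs_nonneg (a - 1)))
  refine (mul_le_mul_of_nonneg_left (abs_powExpDeriv_le hs ht.le)
    (Real.rpow_nonneg ht.le _)).trans_eq ?_
  rw [mul_add, mul_left_comm, rpow_mul_powExp _ _ _ ht, mul_left_comm, rpow_mul_powExp _ _ _ ht]
  ring_nf

theorem abs_powExpDeriv_le_majorant {s a t : ℝ} (hs : 0 ≤ s) (ht : 0 ≤ t) :
    |powExpDeriv s (2 * a - 2) t| ≤ (|2 * a - 2| + 1) * majorant s a t := by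
  refine le_trans ?_ (add_le_majorant a hs ht (abs_nonneg (2 * a - 2)))
  refine (abs_powExpDeriv_le hs ht).trans_eq ?_
  rw [show 2 * a - 2 - 1 = 2 * a - 3 by ring]

theorem rpow_mul_abs_powExpDeriv3_le {s a t : ℝ} (hs : 0 ≤ s) (ht : 0 < t) :
    t ^ a * |powExpDeriv3 s a t| ≤
      (|a * (a - 1) * (a - 2)| + |3 * (a * (a - 1))| + |3 * a| + 1) * majorant s a t := by
  refine (mul_le_mul_of_nonneg_left (abs_powExpDeriv3_le hs ht.le)
    (Real.rpow_nonneg ht.le _)).trans_eq ?_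
  rw [mul_left_comm]
  congr 1
  simp only [mul_add, mul_left_comm (t ^ a), rpow_mul_powExp _ _ _ ht, majorant]
  ring_nf

theorem rpow_mul_abs_meanTerm_add_le {s a t : ℝ} (hs : 0 < s) (hs1 : s ≤ 1) (ha : 1 ≤ a)
    (ht : 0 < t) :
    t ^ (a - 1) * |meanTerm s a t + a / 2 * powExp s (a - 1) t| ≤ a ^ 2 * majorant s a t := by
  refine (mul_le_mul_of_nonneg_left (abs_meanTerm_add_le hs hs1 ha ht.le)
    (Real.rpow_nonneg ht.le _)).trans ?_
  rw [mul_left_comm]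
  refine mul_le_mul_of_nonneg_left ?_ (sq_nonneg a)
  simp only [mul_add, mul_left_comm (t ^ (a - 1)), rpow_mul_powExp _ _ _ ht, majorant]
  rw [show a - 1 + (a - 2) = 2 * a - 3 by ring, show a - 1 + (a - 1) = 2 * a - 2 by ring,
    show a - 1 + a = 2 * a - 1 by ring]
  have := mul_nonneg (pow_nonneg hs.le 3) (powExp_nonneg s (2 * a) ht.le)
  linarith

theorem exists_abs_Pk_floor_le (k : ℕ) :
    ∃ C, 0 < C ∧ ∀ t : ℝ, 1 ≤ t → |Pk k ⌊t⌋| ≤ C * t ^ ((k : ℝ) / 2) := by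
  obtain ⟨C, hC, h⟩ := abs_Pk_le k
  refine ⟨2 * C, by positivity, fun t ht => ?_⟩
  have h1 := h ⌊t⌋ (by linarith [one_le_floor_of_one_le ht])
  have h2 : (⌊t⌋ : ℝ) ^ ((k : ℝ) / 2) ≤ t ^ ((k : ℝ) / 2) := rpow_floor_le (by positivity) ht
  have h3 : 1 ≤ t ^ ((k : ℝ) / 2) := Real.one_le_rpow ht (by positivity)
  nlinarith

theorem exists_abs_remTerm_le (k : ℕ) (hk : 3 ≤ k) :
    ∃ K, 0 < K ∧ ∀ s t : ℝ, 0 < s → s ≤ 1 → 1 ≤ t →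
      |remTerm k s (k / 2) t| ≤ K * majorant s (k / 2) t := by
  obtain ⟨C, hC, hP⟩ := exists_abs_Pk_floor_le k
  have hk3 : (3 : ℝ) ≤ k := by exact_mod_cast hk
  have ha : (1 : ℝ) ≤ (k : ℝ) / 2 := by linarith
  have hV := Vk_pos k
  generalize (k : ℝ) / 2 = a at *
  refine ⟨C * (|a * (a - 1) * (a - 2)| + |3 * (a * (a - 1))| + |3 * a| + 1) +
    Vk k * (a * a ^ 2) + a * Vk k / 2 * (a * (|a - 1| + 1) + a * (|2 * a - 2| + 1)),
    by positivity, fun s t hs hs1 ht => ?_⟩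
  have ht0 : 0 < t := by linarith
  have hm := meanExp_mem hs hs1
  have hu0 : 0 ≤ t - ⌊t⌋ := by linarith [Int.floor_le t]
  have hu1 : t - ⌊t⌋ ≤ 1 := by linarith [Int.lt_floor_add_one t]
  have hd0 : 0 ≤ t ^ a - (⌊t⌋ : ℝ) ^ a := by linarith [rpow_floor_le (by linarith : 0 ≤ a) ht]
  have hd1 := rpow_sub_rpow_floor_le ha ht
  have b1 : |Pk k ⌊t⌋ * (meanExp s * (cubicWeight (t - ⌊t⌋) * powExpDeriv3 s a t))| ≤
      C * ((|a * (a - 1) * (a - 2)| + |3 * (a * (a - 1))| + |3 * a| + 1) * majorant s a t) := by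
    rw [abs_mul, abs_mul, abs_mul, abs_of_nonneg hm.1]
    calc |Pk k ⌊t⌋| * (meanExp s * (|cubicWeight (t - ⌊t⌋)| * |powExpDeriv3 s a t|))
        ≤ C * t ^ a * (1 * (1 * |powExpDeriv3 s a t|)) := by
          gcongr
          · exact mul_nonneg hm.1 (by positivity)
          · exact hP t ht
          · exact hm.2
          · exact abs_cubicWeight_le hu0 hu1
      _ = C * (t ^ a * |powExpDeriv3 s a t|) := by ring
      _ ≤ _ := mul_le_mul_of_nonneg_left (rpow_mul_abs_powExpDeriv3_le hs.le ht0) hC.le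
  have b2 : |Vk k * ((t ^ a - (⌊t⌋ : ℝ) ^ a) * (meanTerm s a t + a / 2 * powExp s (a - 1) t))| ≤
      Vk k * (a * (a ^ 2 * majorant s a t)) := by
    rw [abs_mul, abs_mul, abs_of_pos hV, abs_of_nonneg hd0]
    refine mul_le_mul_of_nonneg_left ?_ hV.le
    refine (mul_le_mul_of_nonneg_right hd1 (abs_nonneg _)).trans ?_
    rw [mul_assoc]
    exact mul_le_mul_of_nonneg_left (rpow_mul_abs_meanTerm_add_le hs hs1 ha ht0) (by linarith)
  have b3 : |(1 - (t - ⌊t⌋)) * (t ^ a - (⌊t⌋ : ℝ) ^ a) * powExpDeriv s (a - 1) t| ≤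
      a * ((|a - 1| + 1) * majorant s a t) := by
    rw [abs_mul, abs_mul, abs_of_nonneg hd0, abs_of_nonneg (by linarith : 0 ≤ 1 - (t - ⌊t⌋))]
    calc (1 - (t - ⌊t⌋)) * (t ^ a - (⌊t⌋ : ℝ) ^ a) * |powExpDeriv s (a - 1) t|
        ≤ 1 * (a * t ^ (a - 1)) * |powExpDeriv s (a - 1) t| := by
          gcongr
          linarith
      _ = a * (t ^ (a - 1) * |powExpDeriv s (a - 1) t|) := by ring
      _ ≤ _ := mul_le_mul_of_nonneg_left (rpow_mul_abs_powExpDeriv_le hs.le ht0) (by linarith)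
  have b4 : |a * (((t - ⌊t⌋) - (t - ⌊t⌋) ^ 2) / 2) * powExpDeriv s (2 * a - 2) t| ≤
      a * ((|2 * a - 2| + 1) * majorant s a t) := by
    have h0 : 0 ≤ ((t - ⌊t⌋) - (t - ⌊t⌋) ^ 2) / 2 := by nlinarith
    have h1 : ((t - ⌊t⌋) - (t - ⌊t⌋) ^ 2) / 2 ≤ 1 := by nlinarith
    rw [abs_mul, abs_mul, abs_of_nonneg h0, abs_of_nonneg (by linarith : 0 ≤ a), mul_assoc]
    refine mul_le_mul_of_nonneg_left ?_ (by linarith)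
    exact (mul_le_of_le_one_left (abs_nonneg _) h1).trans
      (abs_powExpDeriv_le_majorant hs.le ht0.le)
  have hVa : 0 ≤ a * Vk k / 2 := by positivity
  have b5 := mul_le_mul_of_nonneg_left ((abs_sub _ _).trans (add_le_add b3 b4)) hVa
  rw [← abs_of_nonneg hVa, ← abs_mul, abs_of_nonneg hVa] at b5
  unfold remTerm
  refine ((abs_sub _ _).trans
    (add_le_add ((abs_add_le _ _).trans (add_le_add b1 b2)) b5)).trans_eq ?_
  ring

@[fun_prop]
theorem measurable_floor_cast : Measurable fun t : ℝ => (⌊t⌋ : ℝ) :=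
  (measurable_of_countable (fun n : ℤ => (n : ℝ))).comp Int.measurable_floor

@[fun_prop]
theorem measurable_Pk_floor (k : ℕ) : Measurable fun t : ℝ => Pk k ⌊t⌋ :=
  (measurable_Pk k).comp measurable_floor_cast

theorem measurable_remTerm (k : ℕ) (s a : ℝ) : Measurable (remTerm k s a) := by
  unfold remTerm cubicWeight meanTerm powExpDeriv powExpDeriv2 powExpDeriv3
  fun_prop

theorem integrableOn_majorant {s a : ℝ} (ha : 1 < a) (hs : 0 < s) :
    IntegrableOn (majorant s a) (Ioi 0) :=
  (((integrableOn_powExp (by linarith) hs).add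
    ((integrableOn_powExp (by linarith) hs).const_mul s)).add
    ((integrableOn_powExp (by linarith) hs).const_mul (s ^ 2))).add
    ((integrableOn_powExp (by linarith) hs).const_mul (s ^ 3))

theorem setIntegral_majorant {s a : ℝ} (ha : 1 < a) (hs : 0 < s) :
    ∫ t in Ioi (0 : ℝ), majorant s a t =
      (Real.Gamma (2 * a - 2) + Real.Gamma (2 * a - 1) + Real.Gamma (2 * a) +
        Real.Gamma (2 * a + 1)) * s ^ (2 - 2 * a) := by
  have i0 : IntegrableOn (powExp s (2 * a - 3)) (Ioi 0) := integrableOn_powExp (by linarith) hs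
  have i1 : IntegrableOn (fun t => s * powExp s (2 * a - 2) t) (Ioi 0) :=
    (integrableOn_powExp (by linarith) hs).const_mul s
  have i2 : IntegrableOn (fun t => s ^ 2 * powExp s (2 * a - 1) t) (Ioi 0) :=
    (integrableOn_powExp (by linarith) hs).const_mul (s ^ 2)
  have i3 : IntegrableOn (fun t => s ^ 3 * powExp s (2 * a) t) (Ioi 0) :=
    (integrableOn_powExp (by linarith) hs).const_mul (s ^ 3)
  simp only [majorant]
  rw [integral_add (by exact (i0.add i1).add i2) i3, integral_add (by exact i0.add i1) i2,
    integral_add i0 i1, integral_const_mul, integral_const_mul, integral_const_mul,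
    setIntegral_powExp (by linarith) hs, setIntegral_powExp (by linarith) hs,
    setIntegral_powExp (by linarith) hs, setIntegral_powExp (by linarith) hs]
  have p (j : ℕ) : s ^ (2 - 2 * a) = s ^ j * s ^ (2 - 2 * a - j) := by
    rw [← Real.rpow_natCast, ← Real.rpow_add hs]
    ring_nf
  have p1 := p 1
  have p2 := p 2
  have p3 := p 3
  norm_num at p1 p2 p3
  rw [show 2 * a - 3 + 1 = 2 * a - 2 by ring, show 2 * a - 2 + 1 = 2 * a - 1 by ring,
    show 2 * a - 1 + 1 = 2 * a by ring, show -(2 * a - 2) = 2 - 2 * a by ring,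
    show -(2 * a - 1) = 2 - 2 * a - 1 by ring,
    show -(2 * a + 1) = 2 - 2 * a - 3 by ring]
  linear_combination (-Real.Gamma (2 * a - 1)) * p1 - Real.Gamma (2 * a) * p2 -
    Real.Gamma (2 * a + 1) * p3

theorem exists_abs_setIntegral_remTerm_le (k : ℕ) (hk : 3 ≤ k) :
    ∃ K, 0 < K ∧ ∀ s : ℝ, 0 < s → s ≤ 1 →
      IntegrableOn (remTerm k s (k / 2)) (Ioi 1) ∧
      |∫ t in Ioi (1 : ℝ), remTerm k s (k / 2) t| ≤ K * s ^ (2 - (k : ℝ)) := by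
  obtain ⟨K, hK, h⟩ := exists_abs_remTerm_le k hk
  have hk3 : (3 : ℝ) ≤ k := by exact_mod_cast hk
  have ha : (1 : ℝ) < (k : ℝ) / 2 := by linarith
  have h2a : (2 : ℝ) - k = 2 - 2 * ((k : ℝ) / 2) := by ring
  rw [h2a]
  have hm := measurable_remTerm k
  generalize (k : ℝ) / 2 = a at *
  have g0 := Real.Gamma_pos_of_pos (show 0 < 2 * a - 2 by linarith)
  have g1 := Real.Gamma_pos_of_pos (show 0 < 2 * a - 1 by linarith)
  have g2 := Real.Gamma_pos_of_pos (show 0 < 2 * a by linarith)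
  have g3 := Real.Gamma_pos_of_pos (show 0 < 2 * a + 1 by linarith)
  refine ⟨K * (Real.Gamma (2 * a - 2) + Real.Gamma (2 * a - 1) + Real.Gamma (2 * a) +
    Real.Gamma (2 * a + 1)), by positivity, fun s hs hs1 => ?_⟩
  have hi : IntegrableOn (fun t => K * majorant s a t) (Ioi 0) :=
    (integrableOn_majorant ha hs).const_mul K
  have hi1 := hi.mono_set (Ioi_subset_Ioi (zero_le_one (α := ℝ)))
  have hb : ∀ᵐ t ∂volume.restrict (Ioi (1 : ℝ)), ‖remTerm k s a t‖ ≤ K * majorant s a t :=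
    (ae_restrict_mem measurableSet_Ioi).mono fun t ht => h s t hs hs1 (le_of_lt ht)
  refine ⟨hi1.mono' (hm s a).aestronglyMeasurable hb, ?_⟩
  refine (norm_integral_le_of_norm_le hi1 hb).trans ?_
  refine (setIntegral_mono_set hi ?_ (Ioi_subset_Ioi zero_le_one).eventuallyLE).trans_eq ?_
  · exact (ae_restrict_mem measurableSet_Ioi).mono fun t ht =>
      mul_nonneg hK.le (majorant_nonneg a hs.le (le_of_lt ht))
  · rw [integral_const_mul, setIntegral_majorant ha hs, mul_assoc]

/-- The integrand of the cross term. -/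
noncomputable def crossTerm (k : ℕ) (s t : ℝ) : ℝ :=
  Pk k ⌊t⌋ * ((⌊t⌋ : ℝ) ^ ((k : ℝ) / 2) - t ^ ((k : ℝ) / 2)) * Real.exp (-(s * t))

theorem exists_abs_crossTerm_le (k : ℕ) :
    ∃ C, 0 < C ∧ ∀ s t : ℝ, 0 < s → 0 < t → t ≤ 1 → |crossTerm k s t| ≤ C := by
  obtain ⟨C, hC, h⟩ := abs_Pk_le k
  refine ⟨2 * C, by positivity, fun s t hs ht ht1 => ?_⟩
  have hn0 : (0 : ℝ) ≤ ⌊t⌋ := by exact_mod_cast Int.floor_nonneg.2 ht.le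
  have hn1 : (⌊t⌋ : ℝ) ≤ 1 := (Int.floor_le t).trans ht1
  have hk : (0 : ℝ) ≤ (k : ℝ) / 2 := by positivity
  have h1 := h _ hn0
  have h2 := Real.rpow_le_one hn0 hn1 hk
  have h3 := Real.rpow_le_one ht.le ht1 hk
  have h4 := Real.rpow_nonneg hn0 ((k : ℝ) / 2)
  have h5 := Real.rpow_nonneg ht.le ((k : ℝ) / 2)
  have h6 : |Pk k ⌊t⌋| ≤ 2 * C := by nlinarith
  have h7 : |(⌊t⌋ : ℝ) ^ ((k : ℝ) / 2) - t ^ ((k : ℝ) / 2)| ≤ 1 := by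
    rw [abs_le]
    constructor <;> linarith
  have h8 : Real.exp (-(s * t)) ≤ 1 := Real.exp_le_one_iff.2 (by nlinarith)
  rw [crossTerm, abs_mul, abs_mul, abs_of_pos (Real.exp_pos _)]
  calc |Pk k ⌊t⌋| * |(⌊t⌋ : ℝ) ^ ((k : ℝ) / 2) - t ^ ((k : ℝ) / 2)| * Real.exp (-(s * t))
      ≤ 2 * C * 1 * 1 := by gcongr
    _ = 2 * C := by ring

theorem measurable_crossTerm (k : ℕ) (s : ℝ) : Measurable (crossTerm k s) := by
  unfold crossTerm
  fun_prop

theorem integrableOn_crossTerm (k : ℕ) (hk : 3 ≤ k) {s : ℝ} (hs : 0 < s) :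
    IntegrableOn (crossTerm k s) (Ioi 0) := by
  have hk3 : (3 : ℝ) ≤ k := by exact_mod_cast hk
  rw [← Ioc_union_Ioi_eq_Ioi (zero_le_one (α := ℝ))]
  refine IntegrableOn.union ?_ ?_
  · obtain ⟨C, hC, h⟩ := exists_abs_crossTerm_le k
    refine IntegrableOn.of_bound (by simp) (measurable_crossTerm k s).aestronglyMeasurable C ?_
    exact (ae_restrict_mem measurableSet_Ioc).mono fun t ht => h s t hs ht.1 ht.2
  · obtain ⟨C, hC, hP⟩ := exists_abs_Pk_floor_le k
    have hi : IntegrableOn (powExp s k) (Ioi 1) :=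
      (integrableOn_powExp (by linarith) hs).mono_set (Ioi_subset_Ioi zero_le_one)
    refine (hi.const_mul C).mono' (measurable_crossTerm k s).aestronglyMeasurable ?_
    refine (ae_restrict_mem measurableSet_Ioi).mono fun t (ht : 1 < t) => ?_
    have h1 := rpow_floor_le (show 0 ≤ (k : ℝ) / 2 by positivity) ht.le
    have h2 : 0 ≤ (⌊t⌋ : ℝ) ^ ((k : ℝ) / 2) :=
      Real.rpow_nonneg (by linarith [one_le_floor_of_one_le ht.le]) _
    have h3 : |(⌊t⌋ : ℝ) ^ ((k : ℝ) / 2) - t ^ ((k : ℝ) / 2)| ≤ t ^ ((k : ℝ) / 2) := by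
      rw [abs_le]
      constructor <;> linarith
    rw [Real.norm_eq_abs, crossTerm, abs_mul, abs_mul, abs_of_pos (Real.exp_pos _)]
    calc |Pk k ⌊t⌋| * |(⌊t⌋ : ℝ) ^ ((k : ℝ) / 2) - t ^ ((k : ℝ) / 2)| * Real.exp (-(s * t))
        ≤ C * t ^ ((k : ℝ) / 2) * t ^ ((k : ℝ) / 2) * Real.exp (-(s * t)) := by
          gcongr
          exact hP t ht.le
      _ = C * powExp s k t := by
          rw [powExp, mul_assoc C, ← Real.rpow_add (by linarith), add_halves, mul_assoc]

theorem integrableOn_Pk_mul_meanTerm (k : ℕ) {a s : ℝ} (ha : 1 < a) (hs : 0 < s) :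
    IntegrableOn (fun t => Pk k t * meanTerm s a t) (Ioi 0) := by
  have i0 := (integrableOn_Pk_mul_powExp k (b := a) (by linarith) hs).const_mul
    (meanExp s - 1 + meanExp s * s / 2 + meanExp s * s ^ 2 / 12)
  have i1 := (integrableOn_Pk_mul_powExp k (b := a - 1) (by linarith) hs).const_mul
    (meanExp s * a / 2 + meanExp s * s * a / 6)
  have i2 := (integrableOn_Pk_mul_powExp k (b := a - 2) (by linarith) hs).const_mul
    (meanExp s * (a * (a - 1)) / 12)
  refine IntegrableOn.congr_fun ((i0.sub i1).add i2) (fun t _ => ?_) measurableSet_Ioi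
  simp only [Pi.add_apply, Pi.sub_apply, meanTerm_eq]
  ring

theorem exists_abs_setIntegral_Pk_mul_meanTerm_le (k : ℕ) {a : ℝ} (ha : 1 < a) :
    ∃ K, 0 < K ∧ ∀ s : ℝ, 0 < s → s ≤ 1 →
      |∫ t in Ioi (1 : ℝ), Pk k t * meanTerm s a t| ≤ K := by
  obtain ⟨K₀, hK₀, h₀⟩ := exists_abs_setIntegral_Pk_mul_powExp_le k (b := a) (by linarith)
  obtain ⟨K₁, hK₁, h₁⟩ := exists_abs_setIntegral_Pk_mul_powExp_le k (b := a - 1) (by linarith)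
  obtain ⟨K₂, hK₂, h₂⟩ := exists_abs_setIntegral_Pk_mul_powExp_le k (b := a - 2) (by linarith)
  refine ⟨K₀ + a * K₁ + a * (a - 1) * K₂,
    by have : 0 < a - 1 := by linarith
       positivity, fun s hs hs1 => ?_⟩
  have hm := meanExp_mem hs hs1
  have i0 := (integrableOn_Pk_mul_powExp k (b := a) (by linarith) hs).mono_set
    (Ioi_subset_Ioi (zero_le_one (α := ℝ)))
  have i1 := (integrableOn_Pk_mul_powExp k (b := a - 1) (by linarith) hs).mono_set
    (Ioi_subset_Ioi (zero_le_one (α := ℝ)))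
  have i2 := (integrableOn_Pk_mul_powExp k (b := a - 2) (by linarith) hs).mono_set
    (Ioi_subset_Ioi (zero_le_one (α := ℝ)))
  set c₀ := meanExp s - 1 + meanExp s * s / 2 + meanExp s * s ^ 2 / 12 with hc₀
  set c₁ := meanExp s * a / 2 + meanExp s * s * a / 6 with hc₁
  set c₂ := meanExp s * (a * (a - 1)) / 12 with hc₂
  have e : ∫ t in Ioi (1 : ℝ), Pk k t * meanTerm s a t =
      c₀ * (∫ t in Ioi (1 : ℝ), Pk k t * powExp s a t) -
      c₁ * (∫ t in Ioi (1 : ℝ), Pk k t * powExp s (a - 1) t) +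
      c₂ * (∫ t in Ioi (1 : ℝ), Pk k t * powExp s (a - 2) t) := by
    rw [← integral_const_mul, ← integral_const_mul, ← integral_const_mul,
      ← integral_sub (i0.const_mul c₀) (i1.const_mul c₁),
      ← integral_add (by exact (i0.const_mul c₀).sub (i1.const_mul c₁)) (i2.const_mul c₂)]
    congr 1
    ext t
    rw [meanTerm_eq]
    ring
  have b0 : |c₀| ≤ 1 := (abs_meanExp_coeff_le hs hs1).trans (pow_le_one₀ hs.le hs1)
  have b1 : |c₁| ≤ a := by
    have : meanExp s * s ≤ 1 := mul_le_one₀ hm.2 hs.le hs1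
    have : 0 ≤ meanExp s * s := mul_nonneg hm.1 hs.le
    have : 0 ≤ c₁ := by
      have := hm.1
      positivity
    rw [abs_of_nonneg this, hc₁]
    nlinarith [hm.2]
  have b2 : |c₂| ≤ a * (a - 1) := by
    have h1 : 0 ≤ a * (a - 1) := mul_nonneg (by linarith) (by linarith)
    have h2 : 0 ≤ meanExp s * (a * (a - 1)) := mul_nonneg hm.1 h1
    have h3 : meanExp s * (a * (a - 1)) ≤ a * (a - 1) := mul_le_of_le_one_left h1 hm.2
    rw [hc₂, abs_of_nonneg (by linarith)]
    linarith
  rw [e]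
  refine (abs_add_le _ _).trans (add_le_add ((abs_sub _ _).trans (add_le_add ?_ ?_)) ?_)
  · rw [abs_mul]
    exact (mul_le_mul b0 (h₀ s hs) (abs_nonneg _) zero_le_one).trans_eq (one_mul _)
  · rw [abs_mul]
    exact mul_le_mul b1 (h₁ s hs) (abs_nonneg _) (by linarith)
  · rw [abs_mul]
    exact mul_le_mul b2 (h₂ s hs) (abs_nonneg _) (mul_nonneg (by linarith) (by linarith))

theorem setIntegral_Ioi_one_crossTerm (k : ℕ) (hk : 3 ≤ k) {s : ℝ} (hs : 0 < s)
    (hR : IntegrableOn (remTerm k s (k / 2)) (Ioi 1)) :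
    ∫ t in Ioi (1 : ℝ), crossTerm k s t =
      (∫ t in Ioi (1 : ℝ), Pk k t * meanTerm s (k / 2) t) -
        (k / 2) ^ 2 * Vk k / 4 * (∫ t in Ioi (1 : ℝ), powExp s (k - 2) t) +
        ∫ t in Ioi (1 : ℝ), remTerm k s (k / 2) t := by
  have hk3 : (3 : ℝ) ≤ k := by exact_mod_cast hk
  have hsub := Ioi_subset_Ioi (zero_le_one (α := ℝ))
  have iF := (integrableOn_crossTerm k hk hs).mono_set hsub
  have iH := (integrableOn_Pk_mul_meanTerm k (a := k / 2) (by linarith) hs).mono_set hsub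
  have iE := ((integrableOn_powExp (b := k - 2) (by linarith) hs).mono_set hsub).const_mul
    ((k / 2) ^ 2 * Vk k / 4)
  have e (t : ℝ) : crossTerm k s t - ((Pk k t * meanTerm s (k / 2) t -
      (k / 2) ^ 2 * Vk k / 4 * powExp s (k - 2) t) + remTerm k s (k / 2) t) =
      stepTerm k s (k / 2) ⌊t⌋ t := by
    have := integrand_eq k s t
    rw [mul_div_cancel₀ (k : ℝ) two_ne_zero] at this
    rw [crossTerm]
    linarith
  have i2 : IntegrableOn (fun t => (Pk k t * meanTerm s (k / 2) t -
      (k / 2) ^ 2 * Vk k / 4 * powExp s (k - 2) t) + remTerm k s (k / 2) t) (Ioi 1) :=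
    (iH.sub iE).add hR
  have hz : ∫ t in Ioi (1 : ℝ), stepTerm k s (k / 2) ⌊t⌋ t = 0 := by
    refine setIntegral_Ioi_one_eq_zero_of_floor (g := stepTerm k s (k / 2))
      (G := fun n t => Pk k n * stepDiffPrim s (k / 2) n t -
        k / 2 * Vk k / 2 * stepProdPrim s (k / 2) n t) (fun n hn t ht => ?_) (fun n _ => ?_) ?_
    · have ht0 : 0 < t := lt_of_lt_of_le (by exact_mod_cast hn) ht.1
      exact ((hasDerivAt_stepDiffPrim hs _ _ ht0).const_mul _).sub
        ((hasDerivAt_stepProdPrim s _ _ ht0).const_mul _)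
    · simp only [stepDiffPrim_add_one hs, stepProdPrim_add_one]
    · simp_rw [← e]
      exact iF.sub i2
  simp_rw [← e] at hz
  rw [integral_sub iF i2, integral_add (by exact iH.sub iE) hR, integral_sub iH iE,
    integral_const_mul] at hz
  linarith

theorem exists_abs_setIntegral_crossTerm_add_le (k : ℕ) (hk : 3 ≤ k) :
    ∃ K, 0 < K ∧ ∀ s : ℝ, 0 < s → s ≤ 1 →
      |(∫ t in Ioi (0 : ℝ), crossTerm k s t) +
        (k : ℝ) ^ 2 * Vk k / 16 * (Real.Gamma (k - 1) * s ^ (1 - (k : ℝ)))| ≤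
        K * s ^ (2 - (k : ℝ)) := by
  have hk3 : (3 : ℝ) ≤ k := by exact_mod_cast hk
  obtain ⟨K₁, hK₁, h₁⟩ := exists_abs_crossTerm_le k
  obtain ⟨K₂, hK₂, h₂⟩ := exists_abs_setIntegral_Pk_mul_meanTerm_le k (a := k / 2) (by linarith)
  obtain ⟨K₃, hK₃, h₃⟩ := exists_abs_setIntegral_remTerm_le k hk
  have hV := Vk_pos k
  refine ⟨K₁ + K₂ + (k : ℝ) ^ 2 * Vk k / 16 + K₃, by positivity, fun s hs hs1 => ?_⟩
  obtain ⟨hR, hR'⟩ := h₃ s hs hs1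
  have h4 := abs_setIntegral_Ioc_zero_one_le fun t ht => h₁ s t hs ht.1 ht.2
  have h5 := abs_setIntegral_Ioi_one_powExp_sub_le (b := (k : ℝ) - 2) (by linarith) hs
  rw [show (k : ℝ) - 2 + 1 = k - 1 by ring, neg_sub] at h5
  have h6 : 1 ≤ s ^ (2 - (k : ℝ)) :=
    Real.one_le_rpow_of_pos_of_le_one_of_nonpos hs hs1 (by linarith)
  have h7 := h₂ s hs hs1
  rw [setIntegral_Ioc_add_Ioi (integrableOn_crossTerm k hk hs),
    setIntegral_Ioi_one_crossTerm k hk hs hR]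
  have hc : 0 < (k : ℝ) ^ 2 * Vk k / 16 := by positivity
  have e : (k / 2 : ℝ) ^ 2 * Vk k / 4 = (k : ℝ) ^ 2 * Vk k / 16 := by ring
  rw [e]
  generalize (k : ℝ) ^ 2 * Vk k / 16 = c at *
  have h8 : |c * ((∫ t in Ioi (1 : ℝ), powExp s (k - 2) t) -
      Real.Gamma (k - 1) * s ^ (1 - (k : ℝ)))| ≤ c := by
    rw [abs_mul, abs_of_pos hc]
    exact mul_le_of_le_one_right hc.le h5
  have h9 : K₁ + K₂ + c ≤ (K₁ + K₂ + c) * s ^ (2 - (k : ℝ)) :=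
    le_mul_of_one_le_right (by positivity) h6
  rw [abs_le] at *
  constructor <;> linarith

theorem two_mul_Vk_mul_eq (k : ℕ) (hk : 0 < k) (G : ℝ) :
    Real.pi ^ ((k : ℝ) / 2) * k * G * Vk k / (4 * Real.Gamma ((k : ℝ) / 2)) =
      2 * Vk k * ((k : ℝ) ^ 2 * Vk k / 16 * G) := by
  have hk' : (0 : ℝ) < (k : ℝ) / 2 := by positivity
  have hG := (Real.Gamma_pos_of_pos hk').ne'
  have hk0 : (k : ℝ) ≠ 0 := by positivity
  have h : Real.pi ^ ((k : ℝ) / 2) = Vk k * (k / 2 * Real.Gamma ((k : ℝ) / 2)) := by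
    rw [Vk, Real.Gamma_add_one hk'.ne']
    field_simp
  rw [h]
  field_simp
  ring

end

/-- Laplace transform of the cross term. -/
theorem laplace_cross_term (k : ℕ) (hk : 3 ≤ k) :
    ∀ ε : ℝ, 0 < ε → ∃ A : ℝ, 0 < A ∧ ∀ X : ℝ, 2 ≤ X →
      |2 * Vk k * (∫ t in Set.Ioi (0 : ℝ),
            Pk k ((⌊t⌋ : ℝ)) * (((⌊t⌋ : ℝ)) ^ ((k : ℝ) / 2) - t ^ ((k : ℝ) / 2))
              * Real.exp (-t / X))
          + (Real.pi ^ ((k : ℝ) / 2) * (k : ℝ) * Real.Gamma ((k : ℝ) - 1) * Vk k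
              / (4 * Real.Gamma ((k : ℝ) / 2))) * X ^ ((k : ℝ) - 1)|
        ≤ A * X ^ ((k : ℝ) - 2 + ε) := by
  intro ε hε
  obtain ⟨K, hK, h⟩ := exists_abs_setIntegral_crossTerm_add_le k hk
  have hV := Vk_pos k
  refine ⟨2 * Vk k * K, by positivity, fun X hX => ?_⟩
  have hX0 : 0 < X := by linarith
  have h1 := h X⁻¹ (by positivity) (inv_le_one_of_one_le₀ (by linarith))
  rw [Real.inv_rpow hX0.le, Real.inv_rpow hX0.le, ← Real.rpow_neg hX0.le, ← Real.rpow_neg hX0.le,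
    neg_sub, neg_sub] at h1
  have h2 (t : ℝ) : -t / X = -(X⁻¹ * t) := by
    field_simp
  simp only [h2]
  simp only [crossTerm] at h1
  rw [two_mul_Vk_mul_eq k (by omega), mul_assoc (2 * Vk k), mul_assoc (_ * Vk k / 16), ← mul_add,
    abs_mul, abs_of_pos (by positivity : 0 < 2 * Vk k), mul_assoc (2 * Vk k) K]
  refine mul_le_mul_of_nonneg_left (h1.trans ?_) (by positivity)
  gcongr <;> linarith
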